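/- arXiv:2107.04579 — 15 statements merged into one kernel-verified Lean document; each statement's English description precedes it below -/
import Mathlib

section
/- Let b, j and t be integers with 0 < t < q+1. Then Tr(γ^b · γ^{(q−1)j}) = Tr(γ^b · γ^{(q−1)(j+t)}) if and only if (q+1) divides (2j + t − b). -/
/-- For integers `b`, `j`, `t` with `0 < t < q+1`:
`Tr(γ^b · γ^{(q−1)j}) = Tr(γ^b · γ^{(q−1)(j+t)})` iff `(q+1) ∣ (2j + t − b)`. -/
theorem trace_eq_iff_dvd
    (q : ℕ) (F K : Type) [Field F] [Fintype F] [Field K] [Fintype K] [Algebra F K]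
    (hF : Fintype.card F = q) (hK : Fintype.card K = q ^ 2)
    (γ : Kˣ) (hγ : ∀ x : Kˣ, x ∈ Subgroup.zpowers γ)
    (htr : ∀ x : K, algebraMap F K (Algebra.trace F K x) = x + x ^ q)
    (b j t : ℤ) (ht0 : 0 < t) (ht1 : t < (q : ℤ) + 1) :
    Algebra.trace F K ((γ : K) ^ b * (γ : K) ^ (((q : ℤ) - 1) * j)) =
      Algebra.trace F K ((γ : K) ^ b * (γ : K) ^ (((q : ℤ) - 1) * (j + t))) ↔
      ((q : ℤ) + 1) ∣ (2 * j + t - b) := by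
  have hq : 2 ≤ q := by
    have := Fintype.one_lt_card (α := F)
    omega
  have hord : orderOf γ = q ^ 2 - 1 := by
    classical
    rw [orderOf_eq_card_of_forall_mem_zpowers hγ, Nat.card_eq_fintype_card,
      Fintype.card_units, hK]
  have hord' : ((orderOf γ : ℕ) : ℤ) = ((q : ℤ) - 1) * ((q : ℤ) + 1) := by
    have h1 : 1 ≤ q ^ 2 := Nat.one_le_pow _ _ (by omega)
    rw [hord]
    push_cast [h1]
    ring
  have hγ0 : (γ : K) ≠ 0 := γ.ne_zero
  obtain ⟨u, hudef⟩ : ∃ u : K, u = (γ : K) ^ ((q : ℤ) - 1) := ⟨_, rfl⟩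
  have hu0 : u ≠ 0 := by rw [hudef]; exact zpow_ne_zero _ hγ0
  have hu : ∀ n : ℤ, u ^ n = 1 ↔ ((q : ℤ) + 1) ∣ n := by
    intro n
    rw [hudef, ← zpow_mul]
    have h2 : (γ : K) ^ (((q : ℤ) - 1) * n) = 1 ↔ γ ^ (((q : ℤ) - 1) * n) = 1 := by
      rw [← Units.val_zpow_eq_zpow_val, Units.val_eq_one]
    rw [h2, ← orderOf_dvd_iff_zpow_eq_one, hord']
    exact mul_dvd_mul_iff_left (by omega)
  have hpow : ∀ n : ℤ, ((γ : K) ^ b * u ^ n) ^ q = (γ : K) ^ b * u ^ (b - n) := by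
    intro n
    have h3 : u ^ (n * q) = u ^ (-n) := by
      have h4 : u ^ (((q : ℤ) + 1) * n) = 1 := (hu _).2 (dvd_mul_right _ _)
      have h5 : n * q = ((q : ℤ) + 1) * n + -n := by ring
      rw [h5, zpow_add₀ hu0, h4, one_mul]
    have h6 : (γ : K) ^ (b * q) = (γ : K) ^ b * u ^ b := by
      rw [hudef, ← zpow_mul, ← zpow_add₀ hγ0]
      congr 1
      ring
    rw [mul_pow, ← zpow_natCast, ← zpow_natCast, ← zpow_mul, ← zpow_mul, h3, h6, mul_assoc,
      ← zpow_add₀ hu0, sub_eq_add_neg]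
  rw [zpow_mul, zpow_mul, ← hudef, ← (algebraMap F K).injective.eq_iff, htr, htr, hpow, hpow,
    ← hu]
  have hy : (γ : K) ^ b ≠ 0 := zpow_ne_zero _ hγ0
  have ht : u ^ t ≠ 1 := by
    rw [Ne, hu]
    intro h
    have := Int.le_of_dvd ht0 h
    omega
  have e1 : u ^ j = u ^ (b - (j + t)) * u ^ (2 * j + t - b) := by
    rw [← zpow_add₀ hu0]; congr 1; ring
  have e2 : u ^ (j + t) = u ^ j * u ^ t := zpow_add₀ hu0 _ _
  have e3 : u ^ (b - j) = u ^ (b - (j + t)) * u ^ t := by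
    rw [← zpow_add₀ hu0]; congr 1; ring
  have hw : u ^ (b - (j + t)) ≠ 0 := zpow_ne_zero _ hu0
  rw [e2, e3, e1]
  generalize u ^ (b - (j + t)) = w at *
  generalize u ^ (2 * j + t - b) = v at *
  generalize u ^ t = s at *
  generalize (γ : K) ^ b = y at *
  constructor
  · intro h
    have h7 : (y * w * (1 - s)) * (v - 1) = 0 := by linear_combination h
    have h8 : y * w * (1 - s) ≠ 0 :=
      mul_ne_zero (mul_ne_zero hy hw) (sub_ne_zero.2 (Ne.symm ht))
    exact sub_eq_zero.1 ((mul_eq_zero.1 h7).resolve_left h8)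
  · rintro rfl
    ring
end

section
/- Let b and j be integers with 0 ≤ j ≤ q. If γ^b · γ^{(q−1)j} lies in F_q^× (the nonzero elements of the base field F_q inside F_{q^2}), then #Occr(Tr(γ^b · γ^{(q−1)j}), c(γ^b)) = 1, i.e. exactly one index i with 0 ≤ i ≤ q satisfies Tr(γ^b · γ^{(q−1)i}) = Tr(γ^b · γ^{(q−1)j}). -/
open scoped Classical

/-- The number of indices `i` (with `0 ≤ i ≤ q`) where `V i = s`. -/
noncomputable def occr {n : ℕ} {F : Type} (s : F) (V : Fin n → F) : ℕ :=
  (Finset.filter (fun i => V i = s) Finset.univ).card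

/-- The codeword `c(β) = (Tr(β·γ^{(q−1)i}))_{i=0}^{q}` of the irreducible cyclic code
`C_{(q+1,q²)}`. -/
noncomputable def cw (q : ℕ) (F : Type) {K : Type} [Field F] [Field K] [Algebra F K]
    (γ : Kˣ) (β : K) : Fin (q + 1) → F :=
  fun i => Algebra.trace F K (β * (γ : K) ^ (((q : ℤ) - 1) * ((i : ℕ) : ℤ)))

/-- If `γ^b · γ^{(q−1)j}` lies in `F_q^×`, then the symbol
`Tr(γ^b · γ^{(q−1)j})` occurs exactly once in the codeword `c(γ^b)`. -/
theorem occr_eq_one_of_mem_base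
    (q : ℕ) (F K : Type) [Field F] [Fintype F] [Field K] [Fintype K] [Algebra F K]
    (hF : Fintype.card F = q) (hK : Fintype.card K = q ^ 2)
    (γ : Kˣ) (hγ : ∀ x : Kˣ, x ∈ Subgroup.zpowers γ)
    (htr : ∀ x : K, algebraMap F K (Algebra.trace F K x) = x + x ^ q)
    (b j : ℤ) (hj0 : 0 ≤ j) (hjq : j ≤ (q : ℤ))
    (hmem : (γ : K) ^ b * (γ : K) ^ (((q : ℤ) - 1) * j) ∈ Set.range (algebraMap F K) ∧
      (γ : K) ^ b * (γ : K) ^ (((q : ℤ) - 1) * j) ≠ 0) :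
    occr (Algebra.trace F K ((γ : K) ^ b * (γ : K) ^ (((q : ℤ) - 1) * j)))
      (cw q F γ ((γ : K) ^ b)) = 1 := by
  have hq : 2 ≤ q := by
    rw [← hF]; exact Fintype.one_lt_card
  have hcard : (Nat.card Kˣ : ℤ) = ((q : ℤ) - 1) * ((q : ℤ) + 1) := by
    rw [Nat.card_units, Nat.card_eq_fintype_card, hK]
    have : 1 ≤ q ^ 2 := Nat.one_le_pow _ _ (by omega)
    push_cast [Nat.cast_sub this]
    ring
  have hord : (orderOf γ : ℤ) = ((q : ℤ) - 1) * ((q : ℤ) + 1) := by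
    rw [orderOf_eq_card_of_forall_mem_zpowers hγ, hcard]
  have hγ0 : (γ : K) ≠ 0 := γ.ne_zero
  have haq : ((γ : K) ^ b * (γ : K) ^ (((q : ℤ) - 1) * j)) ^ q
      = (γ : K) ^ b * (γ : K) ^ (((q : ℤ) - 1) * j) := by
    obtain ⟨⟨f, hf⟩, -⟩ := hmem
    rw [← hf, ← map_pow, ← hF, FiniteField.pow_card]
  have hinj : ∀ i : ℤ, 0 ≤ i → i ≤ q →
      Algebra.trace F K ((γ : K) ^ b * (γ : K) ^ (((q : ℤ) - 1) * i)) =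
      Algebra.trace F K ((γ : K) ^ b * (γ : K) ^ (((q : ℤ) - 1) * j)) → i = j := by
    intro i hi0 hiq h
    have h2 := congrArg (algebraMap F K) h
    rw [htr, htr, haq] at h2
    have hy : (γ : K) ^ b * (γ : K) ^ (((q : ℤ) - 1) * i) =
        (γ : K) ^ b * (γ : K) ^ (((q : ℤ) - 1) * j) * ((γ ^ (((q : ℤ) - 1) * (i - j)) : Kˣ) : K) := by
      rw [Units.val_zpow_eq_zpow_val, mul_assoc, ← zpow_add₀ hγ0 (((q : ℤ) - 1) * j)]
      congr 2; ring
    rw [hy, mul_pow, haq] at h2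
    generalize (γ : K) ^ b * (γ : K) ^ (((q : ℤ) - 1) * j) = a at h2 hmem
    have hu : (γ ^ (((q : ℤ) - 1) * (i - j)) : Kˣ) ^ (q + 1) = 1 := by
      rw [← zpow_natCast, ← zpow_mul, ← orderOf_dvd_iff_zpow_eq_one, hord]
      exact ⟨i - j, by push_cast; ring⟩
    have hu1 : (γ ^ (((q : ℤ) - 1) * (i - j)) : Kˣ) = 1 := by
      generalize (γ ^ (((q : ℤ) - 1) * (i - j)) : Kˣ) = u at hu h2
      have hu' : (u : K) ^ q * u = 1 := by
        rw [← pow_succ, ← Units.val_pow_eq_pow_val, hu, Units.val_one]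
      have h3 : (u : K) + (u : K) ^ q = 2 := by
        apply mul_left_cancel₀ hmem.2
        linear_combination h2
      have h4 : ((u : K) - 1) ^ 2 = 0 := by
        linear_combination (u : K) * h3 - hu'
      have h5 := pow_eq_zero_iff (two_ne_zero) |>.1 h4
      exact Units.ext (by simpa using sub_eq_zero.1 h5)
    rw [← orderOf_dvd_iff_zpow_eq_one, hord] at hu1
    have h6 := Int.dvd_of_mul_dvd_mul_left (by omega) hu1
    have h7 := Int.eq_zero_of_abs_lt_dvd h6 (by rw [abs_lt]; omega)
    omega
  unfold occr
  rw [Finset.card_eq_one]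
  refine ⟨⟨j.toNat, by omega⟩, ?_⟩
  ext i
  simp only [Finset.mem_filter, Finset.mem_univ, true_and, Finset.mem_singleton]
  unfold cw
  constructor
  · intro h
    have := hinj _ (by omega) (by omega) h
    ext
    simp only
    omega
  · rintro rfl
    simp only [Int.toNat_of_nonneg hj0]
end

section
/- Let b and j be integers with 0 ≤ j ≤ q. If γ^b · γ^{(q−1)j} does not lie in F_q^× (the nonzero elements of the base field F_q inside F_{q^2}), then #Occr(Tr(γ^b · γ^{(q−1)j}), c(γ^b)) = 2, i.e. exactly two indices i with 0 ≤ i ≤ q satisfy Tr(γ^b · γ^{(q−1)i}) = Tr(γ^b · γ^{(q−1)j}). -/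
open scoped Classical

/-- If `γ^b · γ^{(q−1)j}` does not lie in `F_q^×`, then the symbol
`Tr(γ^b · γ^{(q−1)j})` occurs exactly twice in the codeword `c(γ^b)`. -/
theorem occr_eq_two_of_not_mem_base
    (q : ℕ) (F K : Type) [Field F] [Fintype F] [Field K] [Fintype K] [Algebra F K]
    (hF : Fintype.card F = q) (hK : Fintype.card K = q ^ 2)
    (γ : Kˣ) (hγ : ∀ x : Kˣ, x ∈ Subgroup.zpowers γ)
    (htr : ∀ x : K, algebraMap F K (Algebra.trace F K x) = x + x ^ q)
    (b j : ℤ) (hj0 : 0 ≤ j) (hjq : j ≤ (q : ℤ))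
    (hmem : ¬((γ : K) ^ b * (γ : K) ^ (((q : ℤ) - 1) * j) ∈ Set.range (algebraMap F K) ∧
      (γ : K) ^ b * (γ : K) ^ (((q : ℤ) - 1) * j) ≠ 0)) :
    occr (Algebra.trace F K ((γ : K) ^ b * (γ : K) ^ (((q : ℤ) - 1) * j)))
      (cw q F γ ((γ : K) ^ b)) = 2 := by
  have hq : 2 ≤ q := by
    rw [← hF]; exact Fintype.one_lt_card
  have hord : orderOf γ = q ^ 2 - 1 := by
    rw [orderOf_eq_card_of_forall_mem_zpowers hγ, Nat.card_eq_fintype_card,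
      Fintype.card_units, hK]
  have hordZ : ((orderOf γ : ℕ) : ℤ) = ((q : ℤ) - 1) * (q + 1) := by
    rw [hord, Nat.cast_sub (by nlinarith)]; push_cast; ring
  have hγ0 : (γ : K) ≠ 0 := γ.ne_zero
  have hz : ∀ m n : ℤ, (γ : K) ^ m = (γ : K) ^ n ↔ ((q : ℤ) - 1) * (q + 1) ∣ m - n := by
    intro m n
    rw [← hordZ, orderOf_dvd_iff_zpow_eq_one, zpow_sub, mul_inv_eq_one, Units.ext_iff]
    simp
  have hq1 : ((q : ℤ) - 1) ≠ 0 := by omega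
  have hy : ∀ m n : ℤ, (γ : K) ^ b * (γ : K) ^ (((q : ℤ) - 1) * m)
      = (γ : K) ^ b * (γ : K) ^ (((q : ℤ) - 1) * n) ↔ ((q : ℤ) + 1) ∣ m - n := by
    intro m n
    rw [mul_right_inj' (zpow_ne_zero _ hγ0), hz, ← mul_sub, mul_dvd_mul_iff_left hq1]
  have hyq : ∀ m : ℤ, ((γ : K) ^ b * (γ : K) ^ (((q : ℤ) - 1) * m)) ^ q
      = (γ : K) ^ b * (γ : K) ^ (((q : ℤ) - 1) * (b - m)) := by
    intro m
    rw [← zpow_add₀ hγ0, ← zpow_add₀ hγ0, ← zpow_natCast, ← zpow_mul, hz]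
    exact ⟨m, by ring⟩
  have hfix : ∀ x : K, x ^ q = x → x ∈ Set.range (algebraMap F K) := by
    intro x hx
    have hP : (Polynomial.X ^ q - Polynomial.X : Polynomial K) ≠ 0 :=
      FiniteField.X_pow_card_sub_X_ne_zero K (by omega)
    have hdeg := FiniteField.X_pow_card_sub_X_natDegree_eq K (p := q) (by omega)
    have hsub : Finset.univ.image (algebraMap F K) ⊆
        (Polynomial.X ^ q - Polynomial.X : Polynomial K).roots.toFinset := by
      intro y hy'
      obtain ⟨a, -, rfl⟩ := Finset.mem_image.1 hy'
      rw [Multiset.mem_toFinset, Polynomial.mem_roots hP]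
      simp [← map_pow, ← hF, FiniteField.pow_card]
    have heq := Finset.eq_of_subset_of_card_le hsub (by
      rw [Finset.card_image_of_injective _ (algebraMap F K).injective, Finset.card_univ, hF]
      exact (Multiset.toFinset_card_le _).trans ((Polynomial.card_roots' _).trans hdeg.le))
    have hx' : x ∈ Finset.univ.image (algebraMap F K) := by
      rw [heq, Multiset.mem_toFinset, Polynomial.mem_roots hP]
      simp [hx]
    obtain ⟨a, -, ha⟩ := Finset.mem_image.1 hx'
    exact ⟨a, ha⟩
  have hne : ((γ : K) ^ b * (γ : K) ^ (((q : ℤ) - 1) * j)) ^ q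
      ≠ (γ : K) ^ b * (γ : K) ^ (((q : ℤ) - 1) * j) := fun h =>
    hmem ⟨hfix _ h, mul_ne_zero (zpow_ne_zero _ hγ0) (zpow_ne_zero _ hγ0)⟩
  have htreq : ∀ m : ℤ, Algebra.trace F K ((γ : K) ^ b * (γ : K) ^ (((q : ℤ) - 1) * m))
      = Algebra.trace F K ((γ : K) ^ b * (γ : K) ^ (((q : ℤ) - 1) * j)) ↔
      ((q : ℤ) + 1) ∣ m - j ∨ ((q : ℤ) + 1) ∣ m - (b - j) := by
    intro m
    rw [← hy, ← hy, ← (algebraMap F K).injective.eq_iff, htr, htr, hyq, hyq]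
    have hN : ((γ : K) ^ b * (γ : K) ^ (((q : ℤ) - 1) * m))
        * ((γ : K) ^ b * (γ : K) ^ (((q : ℤ) - 1) * (b - m)))
        = ((γ : K) ^ b * (γ : K) ^ (((q : ℤ) - 1) * j))
        * ((γ : K) ^ b * (γ : K) ^ (((q : ℤ) - 1) * (b - j))) := by
      simp only [← zpow_add₀ hγ0]
      congr 1; ring
    have hx0 : (γ : K) ^ b * (γ : K) ^ (((q : ℤ) - 1) * m) ≠ 0 :=
      mul_ne_zero (zpow_ne_zero _ hγ0) (zpow_ne_zero _ hγ0)
    generalize (γ : K) ^ b * (γ : K) ^ (((q : ℤ) - 1) * m) = y at *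
    generalize (γ : K) ^ b * (γ : K) ^ (((q : ℤ) - 1) * (b - m)) = y' at *
    generalize (γ : K) ^ b * (γ : K) ^ (((q : ℤ) - 1) * j) = x at *
    generalize (γ : K) ^ b * (γ : K) ^ (((q : ℤ) - 1) * (b - j)) = x' at *
    constructor
    · intro h
      have : (y - x) * (y - x') = 0 := by linear_combination y * h - hN
      rcases mul_eq_zero.1 this with h | h
      · exact Or.inl (sub_eq_zero.1 h)
      · exact Or.inr (sub_eq_zero.1 h)
    · intro h
      apply mul_left_cancel₀ hx0
      rcases h with rfl | rfl
      · linear_combination hN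
      · linear_combination hN
  rw [hyq, Ne, hy] at hne
  have hpos : (0 : ℤ) < (q : ℤ) + 1 := by omega
  have hk0 := Int.emod_nonneg (b - j) hpos.ne'
  have hk1 := Int.emod_lt_of_pos (b - j) hpos
  have hkd : ((q : ℤ) + 1) ∣ (b - j) - (b - j) % ((q : ℤ) + 1) := Int.dvd_self_sub_emod
  generalize (b - j) % ((q : ℤ) + 1) = k at hk0 hk1 hkd
  have huniq : ∀ m n : ℤ, 0 ≤ m → m ≤ q → 0 ≤ n → n ≤ q → (q : ℤ) + 1 ∣ m - n → m = n := by
    intro m n h1 h2 h3 h4 h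
    have := Int.eq_zero_of_abs_lt_dvd h (by rw [abs_lt]; constructor <;> omega)
    omega
  unfold occr
  have : (Finset.filter (fun i => cw q F γ ((γ : K) ^ b) i =
      Algebra.trace F K ((γ : K) ^ b * (γ : K) ^ (((q : ℤ) - 1) * j))) Finset.univ)
      = {⟨j.toNat, by omega⟩, ⟨k.toNat, by omega⟩} := by
    ext i
    simp only [Finset.mem_filter, Finset.mem_univ, true_and, Finset.mem_insert,
      Finset.mem_singleton, cw, htreq, Fin.ext_iff]
    have hi := i.isLt
    apply or_congr
    · constructor
      · intro h
        have := huniq _ _ (by omega) (by omega) hj0 hjq h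
        omega
      · intro h
        rw [h, Int.toNat_of_nonneg hj0]; simp
    · constructor
      · intro h
        have h2 := dvd_add h hkd
        have := huniq i k (by omega) (by omega) hk0 (by omega) (by rwa [sub_add_sub_cancel] at h2)
        omega
      · intro h
        rw [h, Int.toNat_of_nonneg hk0, dvd_sub_comm]; exact hkd
  rw [this, Finset.card_pair]
  intro h
  rw [Fin.ext_iff] at h
  have : j = k := by
    simp only at h
    omega
  subst this
  exact hne hkd
end

section
/- For every nonzero β ∈ F_{q^2} and every s ∈ F_q, #Occr(s, c(β)) ≤ 2; that is, at most two indices i with 0 ≤ i ≤ q satisfy Tr(β·γ^{(q−1)i}) = s. -/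
open scoped Classical

/-- The Hamming weight of a vector: the number of its nonzero entries. -/
noncomputable def hwt {n : ℕ} {F : Type} [Zero F] (V : Fin n → F) : ℕ :=
  (Finset.filter (fun i => V i ≠ 0) Finset.univ).card

/-- For every nonzero `β ∈ F_{q²}` and every `s ∈ F_q`, the symbol `s` occurs at most
twice in the codeword `c(β)`. -/
theorem occr_le_two
    (q : ℕ) (F K : Type) [Field F] [Fintype F] [Field K] [Fintype K] [Algebra F K]
    (hF : Fintype.card F = q) (hK : Fintype.card K = q ^ 2)
    (γ : Kˣ) (hγ : ∀ x : Kˣ, x ∈ Subgroup.zpowers γ)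
    (htr : ∀ x : K, algebraMap F K (Algebra.trace F K x) = x + x ^ q)
    (β : K) (hβ : β ≠ 0) (s : F) :
    occr s (cw q F γ β) ≤ 2 := by
  have hq : 1 < q := hF ▸ Fintype.one_lt_card
  have hord : ((orderOf γ : ℕ) : ℤ) = ((q : ℤ) - 1) * (q + 1) := by
    rw [orderOf_eq_card_of_forall_mem_zpowers hγ, Nat.card_eq_fintype_card, Fintype.card_units, hK,
      Nat.cast_sub (Nat.one_le_pow _ _ (by omega))]
    push_cast
    ring
  have hinj : ∀ i j : Fin (q + 1), (γ : K) ^ (((q : ℤ) - 1) * ((i : ℕ) : ℤ)) =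
      (γ : K) ^ (((q : ℤ) - 1) * ((j : ℕ) : ℤ)) → i = j := by
    intro i j h
    rw [← Units.val_zpow_eq_zpow_val, ← Units.val_zpow_eq_zpow_val, Units.val_inj] at h
    have h2 := orderOf_dvd_sub_iff_zpow_eq_zpow.mpr h
    rw [hord, ← mul_sub] at h2
    have h3 := Int.dvd_of_mul_dvd_mul_left (by omega) h2
    have h4 := Int.eq_zero_of_abs_lt_dvd h3 (by rw [abs_lt]; constructor <;> omega)
    ext
    omega
  have hnorm : ∀ i : ℤ, (γ : K) ^ (((q : ℤ) - 1) * i) * ((γ : K) ^ (((q : ℤ) - 1) * i)) ^ q = 1 := by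
    intro i
    have : γ ^ (((q : ℤ) - 1) * i) * (γ ^ (((q : ℤ) - 1) * i)) ^ q = 1 := by
      rw [← zpow_natCast, ← zpow_mul, ← zpow_add, ← orderOf_dvd_iff_zpow_eq_one, hord]
      exact ⟨i, by ring⟩
    have h := congrArg (Units.val) this
    simpa using h
  by_contra hcon
  rw [not_le, occr, Finset.two_lt_card] at hcon
  obtain ⟨a, ha, b, hb, c, hc, hab, hac, hbc⟩ := hcon
  have key : ∀ i ∈ Finset.filter (fun i => cw q F γ β i = s) Finset.univ,
      β * ((γ : K) ^ (((q : ℤ) - 1) * ((i : ℕ) : ℤ))) ^ 2 + β ^ q =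
        algebraMap F K s * (γ : K) ^ (((q : ℤ) - 1) * ((i : ℕ) : ℤ)) := by
    intro i hi
    have h := (Finset.mem_filter.mp hi).2
    rw [← h, cw, htr, mul_pow]
    linear_combination (-β ^ q) * hnorm ((i : ℕ) : ℤ)
  have ka := key a ha
  have kb := key b hb
  have kc := key c hc
  have nab := sub_ne_zero.mpr (mt (hinj a b) hab)
  have nac := sub_ne_zero.mpr (mt (hinj a c) hac)
  have nbc := sub_ne_zero.mpr (mt (hinj b c) hbc)
  generalize (γ : K) ^ (((q : ℤ) - 1) * ((a : ℕ) : ℤ)) = u at *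
  generalize (γ : K) ^ (((q : ℤ) - 1) * ((b : ℕ) : ℤ)) = v at *
  generalize (γ : K) ^ (((q : ℤ) - 1) * ((c : ℕ) : ℤ)) = w at *
  have e1 : β * (u + v) = algebraMap F K s := by
    apply mul_left_cancel₀ nab
    linear_combination ka - kb
  have e2 : β * (u + w) = algebraMap F K s := by
    apply mul_left_cancel₀ nac
    linear_combination ka - kc
  have e3 : β * (v - w) = 0 := by linear_combination e1 - e2
  exact (mul_ne_zero hβ nbc) e3
end

section
/- Let s ∈ F_q be nonzero. Then the number of nonzero β ∈ F_{q^2} such that #Occr(s, c(β)) = 1 equals q+1 if q is odd, and equals 0 if q is even. -/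
open scoped Classical

theorem exists_g (q : ℕ) (F K : Type) [Field F] [Fintype F] [Field K] [Fintype K] [Algebra F K]
    (hF : Fintype.card F = q) (hK : Fintype.card K = q ^ 2)
    (γ : Kˣ) (hγ : ∀ x : Kˣ, x ∈ Subgroup.zpowers γ) :
    ∃ g : K, IsPrimitiveRoot g (q + 1) ∧
      ∀ i : ℕ, (γ : K) ^ (((q : ℤ) - 1) * (i : ℤ)) = g ^ i := by
  have hq : 1 < q := hF ▸ Fintype.one_lt_card
  obtain ⟨m, rfl⟩ : ∃ m, q = m + 1 := ⟨q - 1, by omega⟩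
  refine ⟨(γ : K) ^ m, ?_, ?_⟩
  · have ho : orderOf γ = m * (m + 1 + 1) := by
      rw [orderOf_eq_card_of_forall_mem_zpowers hγ, Nat.card_eq_fintype_card,
        Fintype.card_units, hK]
      have : (m + 1) ^ 2 = m * (m + 1 + 1) + 1 := by ring
      omega
    have h1 : IsPrimitiveRoot (γ : K) (m * (m + 1 + 1)) := by
      rw [← ho, ← orderOf_units]
      exact IsPrimitiveRoot.orderOf _
    exact h1.pow (by apply Nat.mul_pos <;> omega) rfl
  · intro i
    rw [← pow_mul, ← zpow_natCast]
    congr 1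
    push_cast
    ring

theorem occr_iff (q : ℕ) (F K : Type) [Field F] [Fintype F] [Field K] [Fintype K] [Algebra F K]
    (hF : Fintype.card F = q) (hK : Fintype.card K = q ^ 2)
    (γ : Kˣ) (g : K) (hg : IsPrimitiveRoot g (q + 1))
    (hgi : ∀ i : ℕ, (γ : K) ^ (((q : ℤ) - 1) * (i : ℤ)) = g ^ i)
    (htr : ∀ x : K, algebraMap F K (Algebra.trace F K x) = x + x ^ q)
    (s : F) (hs : s ≠ 0) (β : K) (h : occr s (cw q F γ β) = 1) :
    ∃ i : Fin (q + 1), 2 * (β * g ^ (i : ℕ)) = algebraMap F K s := by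
  have hq : 1 < q := hF ▸ Fintype.one_lt_card
  have hfrob : ∀ x : K, x ^ (q ^ 2) = x := fun x => by rw [← hK]; exact FiniteField.pow_card x
  have hs' : algebraMap F K s ≠ 0 := by simpa using hs
  unfold occr at h
  obtain ⟨i, hi⟩ := Finset.card_eq_one.1 h
  have key : ∀ j : Fin (q + 1), (β * g ^ (j : ℕ) + (β * g ^ (j : ℕ)) ^ q = algebraMap F K s) ↔
      j = i := by
    intro j
    rw [← htr, (algebraMap F K).injective.eq_iff, ← Finset.mem_singleton (a := i) (b := j), ← hi]
    simp [cw, hgi]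
  have hx := (key i).2 rfl
  set x := β * g ^ (i : ℕ) with hxd
  have hx0 : x ≠ 0 := by
    intro h0
    rw [h0, zero_pow (by omega)] at hx
    exact hs' (by simpa using hx.symm)
  obtain ⟨m, rfl⟩ : ∃ m, q = m + 1 := ⟨q - 1, by omega⟩
  have hw : (x ^ m * g ^ (i : ℕ)) ^ (m + 1 + 1) = 1 := by
    have h1 : (g ^ (i : ℕ)) ^ (m + 1 + 1) = 1 := by
      rw [← pow_mul, mul_comm, pow_mul, hg.pow_eq_one, one_pow]
    rw [mul_pow, h1, mul_one]
    have h2 := hfrob x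
    have h3 : x ^ ((m + 1) ^ 2) = (x ^ m) ^ (m + 1 + 1) * x := by ring
    rw [h3] at h2
    exact mul_right_cancel₀ hx0 (by rw [h2, one_mul])
  obtain ⟨j, hj, hje⟩ := hg.eq_pow_of_pow_eq_one hw
  have hxj : β * g ^ j = x ^ (m + 1) := by rw [hje, hxd]; ring
  have h4 := (key ⟨j, hj⟩).1 (by
    show β * g ^ j + (β * g ^ j) ^ (m + 1) = _
    rw [hxj, ← pow_mul, ← sq, hfrob, add_comm]
    exact hx)
  have h5 : x ^ (m + 1) = x := by rw [← hxj, hxd, ← h4]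
  refine ⟨i, ?_⟩
  rw [← hx, h5, ← hxd, two_mul]

theorem occr_of (q : ℕ) (F K : Type) [Field F] [Fintype F] [Field K] [Fintype K] [Algebra F K]
    (hF : Fintype.card F = q)
    (γ : Kˣ) (g : K) (hg : IsPrimitiveRoot g (q + 1))
    (hgi : ∀ i : ℕ, (γ : K) ^ (((q : ℤ) - 1) * (i : ℤ)) = g ^ i)
    (htr : ∀ x : K, algebraMap F K (Algebra.trace F K x) = x + x ^ q)
    (s : F) (hs : s ≠ 0) (β : K) (h2 : (2 : K) ≠ 0) (i : Fin (q + 1))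
    (h : 2 * (β * g ^ (i : ℕ)) = algebraMap F K s) : β ≠ 0 ∧ occr s (cw q F γ β) = 1 := by
  have hs' : algebraMap F K s ≠ 0 := by simpa using hs
  have hβ : β ≠ 0 := by
    rintro rfl
    apply hs'
    rw [← h]; simp
  refine ⟨hβ, ?_⟩
  have h2F : (2 : F) ≠ 0 := by
    intro h0
    apply h2
    rw [← map_ofNat (algebraMap F K) 2, h0, map_zero]
  have hx : β * g ^ (i : ℕ) = algebraMap F K (s / 2) := by
    rw [map_div₀, map_ofNat, ← h]; field_simp
  have hxq : (β * g ^ (i : ℕ)) ^ q = β * g ^ (i : ℕ) := by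
    rw [hx, ← map_pow, ← hF, FiniteField.pow_card]
  have hN : ∀ j : ℕ, (β * g ^ j) ^ (q + 1) = β ^ (q + 1) := by
    intro j
    rw [mul_pow, ← pow_mul, mul_comm j, pow_mul, hg.pow_eq_one, one_pow, mul_one]
  unfold occr
  rw [Finset.card_eq_one]
  refine ⟨i, ?_⟩
  ext j
  rw [Finset.mem_singleton, Finset.mem_filter, and_iff_right (Finset.mem_univ _)]
  rw [← (algebraMap F K).injective.eq_iff]
  simp only [cw, hgi, htr]
  constructor
  · intro hj
    have e1 := (hN j).trans (hN i).symm
    rw [pow_succ, pow_succ, hxq] at e1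
    have e2 : (β * g ^ (j : ℕ) - β * g ^ (i : ℕ)) ^ 2 = 0 := by
      have e3 : (β * g ^ (j : ℕ)) ^ q = 2 * (β * g ^ (i : ℕ)) - β * g ^ (j : ℕ) := by
        rw [h, ← hj]; ring
      rw [e3] at e1
      linear_combination -e1
    have e4 := sub_eq_zero.1 (pow_eq_zero_iff (two_ne_zero)|>.1 e2)
    exact Fin.ext (hg.pow_inj j.2 i.2 (mul_left_cancel₀ hβ e4))
  · rintro rfl
    rw [hxq, ← h, two_mul]

/-- For a nonzero symbol `s ∈ F_q`, the number of nonzero `β ∈ F_{q²}` whose codeword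
`c(β)` contains `s` exactly once is `q+1` if `q` is odd, and `0` if `q` is even. -/
theorem card_occr_eq_one
    (q : ℕ) (F K : Type) [Field F] [Fintype F] [Field K] [Fintype K] [Algebra F K]
    (hF : Fintype.card F = q) (hK : Fintype.card K = q ^ 2)
    (γ : Kˣ) (hγ : ∀ x : Kˣ, x ∈ Subgroup.zpowers γ)
    (htr : ∀ x : K, algebraMap F K (Algebra.trace F K x) = x + x ^ q)
    (s : F) (hs : s ≠ 0) :
    (Odd q →
      (Finset.filter (fun β : K => β ≠ 0 ∧ occr s (cw q F γ β) = 1) Finset.univ).card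
        = q + 1) ∧
    (Even q →
      (Finset.filter (fun β : K => β ≠ 0 ∧ occr s (cw q F γ β) = 1) Finset.univ).card
        = 0) := by
  obtain ⟨g, hg, hgi⟩ := exists_g q F K hF hK γ hγ
  have hs' : algebraMap F K s ≠ 0 := by simpa using hs
  constructor
  · intro hodd
    have h2 : (2 : K) ≠ 0 := by
      apply Ring.two_ne_zero
      intro h
      have := FiniteField.even_card_iff_char_two.1 h
      rw [hK] at this
      have h3 := Nat.odd_iff.1 (hodd.pow (n := 2))
      omega
    have hg0 : ∀ i : ℕ, g ^ i ≠ 0 := fun i => pow_ne_zero _ (hg.ne_zero (by omega))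
    have himg : (Finset.filter (fun β : K => β ≠ 0 ∧ occr s (cw q F γ β) = 1) Finset.univ)
        = Finset.univ.image
          (fun i : Fin (q + 1) => algebraMap F K s / 2 * (g ^ (i : ℕ))⁻¹) := by
      ext β
      rw [Finset.mem_filter, Finset.mem_image, and_iff_right (Finset.mem_univ _)]
      constructor
      · rintro ⟨-, h⟩
        obtain ⟨i, hi⟩ := occr_iff q F K hF hK γ g hg hgi htr s hs β h
        refine ⟨i, Finset.mem_univ _, ?_⟩
        have := hg0 i
        rw [← hi]
        field_simp
      · rintro ⟨i, -, hi⟩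
        refine occr_of q F K hF γ g hg hgi htr s hs β h2 i ?_
        have := hg0 i
        rw [← hi]
        field_simp
    rw [himg, Finset.card_image_of_injective, Finset.card_univ, Fintype.card_fin]
    intro i j hij
    have := mul_left_cancel₀ (div_ne_zero hs' h2) hij
    exact Fin.ext (hg.pow_inj i.2 j.2 (inv_injective this))
  · intro heven
    have h2 : (2 : K) = 0 := by
      have h : ringChar K = 2 := by
        apply FiniteField.even_card_iff_char_two.2
        rw [hK]
        exact Nat.even_iff.1 (heven.pow_of_ne_zero (by norm_num))
      have := ringChar.Nat.cast_ringChar (R := K)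
      rw [h] at this
      exact_mod_cast this
    rw [Finset.card_eq_zero, Finset.filter_eq_empty_iff]
    rintro β - ⟨-, h⟩
    obtain ⟨i, hi⟩ := occr_iff q F K hF hK γ g hg hgi htr s hs β h
    rw [h2, zero_mul] at hi
    exact hs' hi.symm
end

section
/- Let β ∈ F_{q^2} be nonzero and let s ∈ F_q satisfy #Occr(s, c(β)) = 1. Then q is odd if and only if s ≠ 0. -/
open scoped Classical

/-- If the symbol `s ∈ F_q` occurs exactly once in the codeword `c(β)` (with `β ≠ 0`),
then `q` is odd iff `s ≠ 0`. -/
theorem odd_iff_ne_zero_of_occr_eq_one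
    (q : ℕ) (F K : Type) [Field F] [Fintype F] [Field K] [Fintype K] [Algebra F K]
    (hF : Fintype.card F = q) (hK : Fintype.card K = q ^ 2)
    (γ : Kˣ) (hγ : ∀ x : Kˣ, x ∈ Subgroup.zpowers γ)
    (htr : ∀ x : K, algebraMap F K (Algebra.trace F K x) = x + x ^ q)
    (β : K) (hβ : β ≠ 0) (s : F) (h : occr s (cw q F γ β) = 1) :
    Odd q ↔ s ≠ 0 := by
  have hinj := (algebraMap F K).injective
  have hq2 : ∀ x : K, (x ^ q) ^ q = x := fun x => by
    rw [← pow_mul, ← sq, ← hK, FiniteField.pow_card]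
  have hord : (γ : K) ^ (((q : ℤ) - 1) * ((q : ℤ) + 1)) = 1 := by
    have h1 : (γ : K) ^ (q ^ 2) = γ := by rw [← hK, FiniteField.pow_card]
    have e : ((q : ℤ) - 1) * ((q : ℤ) + 1) = ((q ^ 2 : ℕ) : ℤ) - 1 := by push_cast; ring
    rw [e, zpow_sub₀ γ.ne_zero, zpow_natCast, h1, zpow_one, div_self γ.ne_zero]
  obtain ⟨m, hm⟩ := hγ (Units.mk0 β hβ)
  have hm' : (γ : K) ^ m = β := by
    have := congrArg (Units.val) hm
    simpa using this
  unfold occr at h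
  obtain ⟨i, hi⟩ := Finset.card_eq_one.mp h
  have hi1 : cw q F γ β i = s := by
    have : i ∈ ({i} : Finset (Fin (q + 1))) := Finset.mem_singleton_self i
    rw [← hi] at this
    exact (Finset.mem_filter.mp this).2
  set x : K := β * (γ : K) ^ (((q : ℤ) - 1) * ((i : ℕ) : ℤ)) with hx
  have hx0 : x ≠ 0 := mul_ne_zero hβ (zpow_ne_zero _ γ.ne_zero)
  have hcw : Algebra.trace F K x = s := hi1
  have hpos : (0 : ℤ) < (q : ℤ) + 1 := by positivity
  set t : ℤ := m + q * (i : ℕ) with ht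
  have hn0 := Int.emod_nonneg t hpos.ne'
  have hn1 := Int.emod_lt_of_pos t hpos
  have hdiv := Int.emod_add_mul_ediv t ((q : ℤ) + 1)
  let j : Fin (q + 1) := ⟨(t % ((q : ℤ) + 1)).toNat, by omega⟩
  have hj : ((j : ℕ) : ℤ) = t % ((q : ℤ) + 1) := Int.toNat_of_nonneg hn0
  have hxj : β * (γ : K) ^ (((q : ℤ) - 1) * ((j : ℕ) : ℤ)) = x ^ q := by
    have e1 : (γ : K) ^ (((q : ℤ) - 1) * ((j : ℕ) : ℤ)) = (γ : K) ^ (((q : ℤ) - 1) * t) := by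
      have e : ((q : ℤ) - 1) * t = ((q : ℤ) - 1) * ((j : ℕ) : ℤ)
          + (((q : ℤ) - 1) * ((q : ℤ) + 1)) * (t / ((q : ℤ) + 1)) := by
        rw [hj]; linear_combination (-((q : ℤ) - 1)) * hdiv
      rw [e, zpow_add₀ γ.ne_zero, zpow_mul _ (((q : ℤ) - 1) * ((q : ℤ) + 1)), hord, one_zpow,
        mul_one]
    rw [e1, hx, ← hm', ← zpow_add₀ γ.ne_zero, ← zpow_add₀ γ.ne_zero, ← zpow_natCast,
      ← zpow_mul]
    congr 1
    rw [ht]; ring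
  have hjs : cw q F γ β j = s := by
    unfold cw
    rw [hxj, ← hcw]
    apply hinj
    rw [htr, htr, hq2, add_comm]
  have hji : j = i := by
    have : j ∈ Finset.filter (fun i => cw q F γ β i = s) Finset.univ :=
      Finset.mem_filter.mpr ⟨Finset.mem_univ _, hjs⟩
    rw [hi] at this
    exact Finset.mem_singleton.mp this
  rw [hji] at hxj
  have hfix : x ^ q = x := hxj.symm
  have hs : algebraMap F K s = 2 * x := by rw [← hcw, htr, hfix, two_mul]
  have hs0 : s ≠ 0 ↔ (2 : K) ≠ 0 := by
    rw [← (map_ne_zero (algebraMap F K)), hs]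
    simp [hx0]
  have h2 : (2 : K) = algebraMap F K 2 := (map_ofNat _ 2).symm
  rw [hs0, h2, map_ne_zero, ← hF]
  constructor
  · intro ho
    apply Ring.two_ne_zero
    intro hc
    have := FiniteField.even_card_of_char_two hc
    rw [Nat.odd_iff] at ho
    omega
  · intro h2
    rw [Nat.odd_iff]
    apply FiniteField.odd_card_of_char_ne_two
    intro hc
    apply h2
    have := ringChar.Nat.cast_ringChar (R := F)
    rw [hc] at this
    exact_mod_cast this
end

section
/- Suppose q is even. Let β ∈ F_{q^2} be nonzero and let s ∈ F_q satisfy #Occr(s, c(β)) = 2. Then s ≠ 0. -/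
open scoped Classical

/-- Suppose `q` is even. If the symbol `s ∈ F_q` occurs exactly twice in the codeword
`c(β)` (with `β ≠ 0`), then `s ≠ 0`. -/
theorem ne_zero_of_occr_eq_two_of_even
    (q : ℕ) (F K : Type) [Field F] [Fintype F] [Field K] [Fintype K] [Algebra F K]
    (hF : Fintype.card F = q) (hK : Fintype.card K = q ^ 2)
    (γ : Kˣ) (hγ : ∀ x : Kˣ, x ∈ Subgroup.zpowers γ)
    (htr : ∀ x : K, algebraMap F K (Algebra.trace F K x) = x + x ^ q)
    (hq : Even q)
    (β : K) (hβ : β ≠ 0) (s : F) (h : occr s (cw q F γ β) = 2) :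
    s ≠ 0 := by
  rintro rfl
  have hq1 : 1 < q := hF ▸ Fintype.one_lt_card
  have h1 : 1 < (Finset.filter (fun i => cw q F γ β i = 0) Finset.univ).card := by
    have h' := h
    unfold occr at h'
    omega
  obtain ⟨i, hi, j, hj, hij⟩ := Finset.one_lt_card.1 h1
  replace hi := (Finset.mem_filter.1 hi).2
  replace hj := (Finset.mem_filter.1 hj).2
  simp only [cw] at hi hj
  have ei := htr (β * (γ : K) ^ (((q : ℤ) - 1) * ((i : ℕ) : ℤ)))
  have ej := htr (β * (γ : K) ^ (((q : ℤ) - 1) * ((j : ℕ) : ℤ)))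
  rw [hi, map_zero] at ei
  rw [hj, map_zero] at ej
  have hγ0 : (γ : K) ≠ 0 := γ.ne_zero
  obtain ⟨x, hx⟩ : ∃ x : K, x = β * (γ : K) ^ (((q : ℤ) - 1) * ((i : ℕ) : ℤ)) := ⟨_, rfl⟩
  have hx0 : x ≠ 0 := by
    rw [hx]
    exact mul_ne_zero hβ (zpow_ne_zero _ hγ0)
  obtain ⟨t, ht⟩ : ∃ t : Kˣ, t = γ ^ (((q : ℤ) - 1) * (((j : ℕ) : ℤ) - ((i : ℕ) : ℤ))) := ⟨_, rfl⟩
  have hy : β * (γ : K) ^ (((q : ℤ) - 1) * ((j : ℕ) : ℤ)) = x * (t : K) := by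
    rw [hx, ht, Units.val_zpow_eq_zpow_val, mul_assoc, ← zpow_add₀ hγ0]
    congr 2
    ring
  rw [← hx] at ei
  rw [hy, mul_pow] at ej
  have hxq : x ^ q = -x := by linear_combination -ei
  rw [hxq] at ej
  have htq : (t : K) ^ q = t := by
    apply mul_left_cancel₀ hx0
    linear_combination ej
  have htq' : t ^ q = t := by
    apply Units.ext
    simpa using htq
  have ht1 : t ^ ((q : ℤ) - 1) = 1 := by
    rw [zpow_sub, zpow_natCast, htq', zpow_one, mul_inv_cancel]
  rw [ht, ← zpow_mul] at ht1
  have hord : orderOf γ = q ^ 2 - 1 := by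
    rw [orderOf_eq_card_of_forall_mem_zpowers hγ, Nat.card_eq_fintype_card,
      Fintype.card_units, hK]
  have hdvd := orderOf_dvd_iff_zpow_eq_one.2 ht1
  have hq2 : 1 ≤ q ^ 2 := Nat.one_le_pow _ _ (by omega)
  rw [hord, Nat.cast_sub hq2] at hdvd
  push_cast at hdvd
  have hne : (q : ℤ) - 1 ≠ 0 := by omega
  have hd2 : ((q : ℤ) + 1) ∣ ((q : ℤ) - 1) * (((j : ℕ) : ℤ) - ((i : ℕ) : ℤ)) := by
    obtain ⟨k, hk⟩ := hdvd
    refine ⟨k, mul_left_cancel₀ hne ?_⟩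
    linear_combination hk
  obtain ⟨m, hm⟩ := hq
  have hcop : IsCoprime ((q : ℤ) + 1) ((q : ℤ) - 1) := by
    refine ⟨1 - m, m, ?_⟩
    have : (q : ℤ) = m + m := by exact_mod_cast hm
    rw [this]
    ring
  have hd3 := hcop.dvd_of_dvd_mul_left hd2
  have hi2 := i.isLt
  have hj2 := j.isLt
  apply hij
  apply Fin.ext
  have := Int.eq_zero_of_abs_lt_dvd hd3 (by rw [abs_lt]; constructor <;> omega)
  omega
end

section
/- The number of pairs (α, β) with α ∈ F_q nonzero and β ∈ F_{q^2} nonzero such that the Hamming weight of the vector (α + Tr(β·γ^{(q−1)i}))_{i=0}^{q} ∈ F_q^{q+1} equals q, is q² − 1 if q is odd, and is 0 if q is even. -/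
open scoped Classical

theorem aux_u (q : ℕ) (K : Type) [Field K] [Fintype K] (hq : 2 ≤ q)
    (hK : Fintype.card K = q ^ 2)
    (γ : Kˣ) (hγ : ∀ x : Kˣ, x ∈ Subgroup.zpowers γ) (u : Fin (q + 1) → K)
    (hu : ∀ i, u i = (γ : K) ^ (((q : ℤ) - 1) * ((i : ℕ) : ℤ))) :
    Function.Injective u ∧ (∀ i, u i ^ q * u i = 1) ∧
    (∀ b : K, b ≠ 0 → ∀ i, ∃ j, b * u i * u j = b ^ q) := by
  have ho : (orderOf γ : ℤ) = ((q : ℤ) - 1) * (q + 1) := by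
    rw [orderOf_eq_card_of_forall_mem_zpowers hγ, Nat.card_units, Nat.card_eq_fintype_card, hK,
      Nat.cast_sub (Nat.one_le_pow _ _ (by omega))]
    push_cast
    ring
  have hu' : ∀ i, u i = ((γ ^ (((q : ℤ) - 1) * ((i : ℕ) : ℤ)) : Kˣ) : K) := by
    intro i; rw [hu]; simp
  have hq1 : (q : ℤ) - 1 ≠ 0 := by omega
  have key : ∀ m n : ℤ, (q + 1 : ℤ) ∣ n - m → γ ^ (((q : ℤ) - 1) * m) = γ ^ (((q : ℤ) - 1) * n) := by
    intro m n h
    rw [zpow_eq_zpow_iff_modEq, Int.modEq_iff_dvd, ho, ← mul_sub]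
    exact mul_dvd_mul_left _ h
  refine ⟨?_, ?_, ?_⟩
  · intro i j h
    rw [hu', hu'] at h
    have h := Units.ext h
    rw [zpow_eq_zpow_iff_modEq, Int.modEq_iff_dvd, ho, ← mul_sub] at h
    have h := Int.dvd_of_mul_dvd_mul_left hq1 h
    have hi := i.2
    have hj := j.2
    have := Int.eq_zero_of_abs_lt_dvd h (by rw [abs_lt]; constructor <;> omega)
    ext; omega
  · intro i
    rw [hu', ← Units.val_pow_eq_pow_val, ← Units.val_mul, ← pow_succ, ← zpow_natCast, ← zpow_mul]
    have := key (i * (q + 1)) 0 (by simp)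
    rw [mul_zero, zpow_zero] at this
    rw [Units.val_eq_one, ← this]
    congr 1
    push_cast
    ring
  · intro b hb i
    obtain ⟨k, hk⟩ := hγ (Units.mk0 b hb)
    have hk : γ ^ k = Units.mk0 b hb := hk
    have hbk : b = ((γ ^ k : Kˣ) : K) := by rw [hk]; rfl
    have h0 : 0 ≤ (k - i) % ((q : ℤ) + 1) := Int.emod_nonneg _ (by omega)
    have h1 : (k - i) % ((q : ℤ) + 1) < q + 1 := Int.emod_lt_of_pos _ (by omega)
    refine ⟨⟨((k - i) % ((q : ℤ) + 1)).toNat, by omega⟩, ?_⟩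
    rw [hu', hu', hbk, ← Units.val_pow_eq_pow_val, ← Units.val_mul, ← Units.val_mul]
    congr 1
    simp only [Int.toNat_of_nonneg h0]
    rw [key _ (k - i) (Int.dvd_self_sub_emod), ← zpow_natCast, ← zpow_mul, ← zpow_add, ← zpow_add]
    congr 1
    ring

theorem aux_key (q : ℕ) (F K : Type) [Field F] [Fintype F] [Field K] [Fintype K] [Algebra F K]
    (hF : Fintype.card F = q) (hK : Fintype.card K = q ^ 2)
    (γ : Kˣ) (hγ : ∀ x : Kˣ, x ∈ Subgroup.zpowers γ)
    (htr : ∀ x : K, algebraMap F K (Algebra.trace F K x) = x + x ^ q)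
    (u : Fin (q + 1) → K)
    (hu : ∀ i, u i = (γ : K) ^ (((q : ℤ) - 1) * ((i : ℕ) : ℤ)))
    (a : F) (b : K) (ha : a ≠ 0) (hb : b ≠ 0) :
    hwt (fun i : Fin (q + 1) => a + cw q F γ b i) = q ↔
      ∃ i, 2 * b * u i = - algebraMap F K a := by
  have hq : 2 ≤ q := by rw [← hF]; exact Fintype.one_lt_card
  obtain ⟨hinj, hn, hc⟩ := aux_u q K hq hK γ hγ u hu
  have hu0 : ∀ i, u i ≠ 0 := fun i h => by have := hn i; rw [h] at this; simp at this
  have ha' : algebraMap F K a ≠ 0 := by simpa using ha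
  have hz : ∀ i, a + cw q F γ b i = 0 ↔ b * u i ^ 2 + algebraMap F K a * u i + b ^ q = 0 := by
    intro i
    rw [← (algebraMap F K).injective.eq_iff, map_add, map_zero, cw, htr, ← hu,
      ← mul_left_inj' (hu0 i), zero_mul, mul_pow]
    have : (algebraMap F K a + (b * u i + b ^ q * u i ^ q)) * u i =
      b * u i ^ 2 + algebraMap F K a * u i + b ^ q := by
      linear_combination b ^ q * hn i
    rw [this]
  have hw : hwt (fun i : Fin (q + 1) => a + cw q F γ b i) = q ↔
      ∃! i, a + cw q F γ b i = 0 := by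
    have h := Finset.card_filter_add_card_filter_not (s := (Finset.univ : Finset (Fin (q+1))))
      (fun i => a + cw q F γ b i = 0)
    rw [Finset.card_univ, Fintype.card_fin] at h
    have h2 : (∃! i, a + cw q F γ b i = 0) ↔
      (Finset.univ.filter (fun i => a + cw q F γ b i = 0)).card = 1 := by
      rw [Finset.card_eq_one]
      simp only [ExistsUnique, Finset.ext_iff, Finset.mem_filter, Finset.mem_univ, true_and,
        Finset.mem_singleton]
      constructor
      · rintro ⟨i, h1, h2⟩
        exact ⟨i, fun j => ⟨h2 j, fun h => h ▸ h1⟩⟩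
      · rintro ⟨i, h⟩
        exact ⟨i, (h i).2 rfl, fun j => (h j).1⟩
    rw [h2]
    unfold hwt
    simp only [ne_eq]
    omega
  rw [hw]
  simp only [hz]
  constructor
  · rintro ⟨i, h1, h2⟩
    obtain ⟨j, hj⟩ := hc b hb i
    have h3 : b * u i + algebraMap F K a + b * u j = 0 := by
      apply mul_right_cancel₀ (hu0 i)
      linear_combination h1 + hj
    have h4 := h2 j (by linear_combination u j * h3 - hj)
    rw [h4] at h3
    exact ⟨i, by linear_combination h3⟩
  · rintro ⟨i, hi⟩
    have h2 : (2 : F) ≠ 0 := by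
      intro h
      have h : (2 : K) = 0 := by rw [← map_ofNat (algebraMap F K) 2, h, map_zero]
      rw [h] at hi
      simp [ha] at hi
    have h2K : (2 : K) ≠ 0 := by
      rw [← map_ofNat (algebraMap F K) 2]; exact (map_ne_zero (algebraMap F K)).2 h2
    have hbu : b * u i = algebraMap F K (-a / 2) := by
      simp only [map_div₀, map_neg, map_ofNat]
      field_simp
      linear_combination hi
    have hp : (b * u i) ^ q = b * u i := by
      rw [hbu, ← map_pow, ← hF, FiniteField.pow_card]
    have hbq : b ^ q = b * u i ^ 2 := by
      rw [mul_pow] at hp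
      linear_combination u i * hp - b ^ q * hn i
    refine ⟨i, ?_, ?_⟩
    · show b * u i ^ 2 + algebraMap F K a * u i + b ^ q = 0
      linear_combination hbq + u i * hi
    · intro j hj
      have hj : b * u j ^ 2 + algebraMap F K a * u j + b ^ q = 0 := hj
      have : b * (u j - u i) ^ 2 = 0 := by
        linear_combination hj - hbq - u j * hi
      have := (mul_eq_zero.1 this).resolve_left hb
      exact hinj (sub_eq_zero.1 (pow_eq_zero_iff (two_ne_zero) |>.1 this))

/-- The number of pairs `(α, β)` with `α ∈ F_q^×` and `β ∈ F_{q²}^×` such that the vector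
`(α + Tr(β·γ^{(q−1)i}))_{i=0}^{q}` has Hamming weight exactly `q` is `q² − 1` if `q` is
odd, and `0` if `q` is even. -/
theorem card_weight_q
    (q : ℕ) (F K : Type) [Field F] [Fintype F] [Field K] [Fintype K] [Algebra F K]
    (hF : Fintype.card F = q) (hK : Fintype.card K = q ^ 2)
    (γ : Kˣ) (hγ : ∀ x : Kˣ, x ∈ Subgroup.zpowers γ)
    (htr : ∀ x : K, algebraMap F K (Algebra.trace F K x) = x + x ^ q) :
    (Odd q →
      (Finset.filter (fun p : F × K => p.1 ≠ 0 ∧ p.2 ≠ 0 ∧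
          hwt (fun i : Fin (q + 1) => p.1 + cw q F γ p.2 i) = q) Finset.univ).card
        = q ^ 2 - 1) ∧
    (Even q →
      (Finset.filter (fun p : F × K => p.1 ≠ 0 ∧ p.2 ≠ 0 ∧
          hwt (fun i : Fin (q + 1) => p.1 + cw q F γ p.2 i) = q) Finset.univ).card
        = 0) := by
  have hq : 2 ≤ q := by rw [← hF]; exact Fintype.one_lt_card
  obtain ⟨u, hu⟩ : ∃ u : Fin (q + 1) → K, ∀ i, u i =
    (γ : K) ^ (((q : ℤ) - 1) * ((i : ℕ) : ℤ)) := ⟨_, fun _ => rfl⟩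
  obtain ⟨hinj, hn, hc⟩ := aux_u q K hq hK γ hγ u hu
  have hu0 : ∀ i, u i ≠ 0 := fun i h => by have := hn i; rw [h] at this; simp at this
  have key := aux_key q F K hF hK γ hγ htr u hu
  constructor
  · intro ho
    have h2 : (2 : F) ≠ 0 := by
      apply Ring.two_ne_zero
      intro h
      rw [FiniteField.even_card_iff_char_two, hF] at h
      have := Nat.odd_iff.1 ho
      omega
    have h2K : (2 : K) ≠ 0 := by
      rw [← map_ofNat (algebraMap F K) 2]; exact (map_ne_zero (algebraMap F K)).2 h2
    have : (Finset.filter (fun p : F × K => p.1 ≠ 0 ∧ p.2 ≠ 0 ∧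
          hwt (fun i : Fin (q + 1) => p.1 + cw q F γ p.2 i) = q) Finset.univ) =
        ((Finset.univ.erase (0 : F)) ×ˢ (Finset.univ : Finset (Fin (q + 1)))).image
          (fun p => (p.1, - algebraMap F K p.1 / (2 * u p.2))) := by
      ext ⟨a, b⟩
      simp only [Finset.mem_filter, Finset.mem_univ, true_and, Finset.mem_image,
        Finset.mem_product, Finset.mem_erase, and_true, Prod.exists, Prod.mk.injEq]
      constructor
      · rintro ⟨ha, hb, h⟩
        obtain ⟨i, hi⟩ := (key a b ha hb).1 h
        refine ⟨a, i, ha, rfl, ?_⟩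
        rw [← hi]
        have := hu0 i
        field_simp
      · rintro ⟨a', i, ha, rfl, rfl⟩
        have ha' : algebraMap F K a' ≠ 0 := by simpa using ha
        have hb : - algebraMap F K a' / (2 * u i) ≠ 0 :=
          div_ne_zero (neg_ne_zero.2 ha') (mul_ne_zero h2K (hu0 i))
        refine ⟨ha, hb, (key _ _ ha hb).2 ⟨i, ?_⟩⟩
        have := hu0 i
        field_simp
    rw [this, Finset.card_image_of_injOn, Finset.card_product,
      Finset.card_erase_of_mem (Finset.mem_univ _), Finset.card_univ, Finset.card_univ, hF,
      Fintype.card_fin]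
    · have := Nat.sq_sub_sq q 1
      rw [one_pow] at this
      rw [this, mul_comm]
    · rintro ⟨a, i⟩ h1 ⟨a', j⟩ h2 h
      simp only [Finset.coe_product, Set.mem_prod, Finset.mem_coe, Finset.mem_erase] at h1
      simp only [Prod.mk.injEq] at h
      obtain ⟨rfl, h⟩ := h
      have ha' : - algebraMap F K a ≠ 0 := neg_ne_zero.2 (by simpa using h1.1.1)
      rw [div_eq_mul_inv, div_eq_mul_inv] at h
      have h := inv_injective (mul_left_cancel₀ ha' h)
      have h := mul_left_cancel₀ h2K h
      rw [hinj h]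
  · intro he
    rw [Finset.card_eq_zero, Finset.filter_eq_empty_iff]
    rintro ⟨a, b⟩ - ⟨ha, hb, h⟩
    obtain ⟨i, hi⟩ := (key a b ha hb).1 h
    have h2 : (2 : F) = 0 := by
      have := FiniteField.even_card_iff_char_two.2 (hF ▸ Nat.even_iff.1 he : Fintype.card F % 2 = 0)
      have h3 := ringChar.Nat.cast_ringChar (R := F)
      rw [this] at h3
      simpa using h3
    have h : (2 : K) = 0 := by rw [← map_ofNat (algebraMap F K) 2, h2, map_zero]
    rw [h] at hi
    simp at hi
    exact ha hi
end

section
/- The code C_{(1,q+1,q^2)} has exactly q³ codewords, every nonzero codeword has Hamming weight q−1, q, or q+1, each of these three weights actually occurs, and the number of codewords of Hamming weight exactly q is q² − 1. -/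
open scoped Classical

/-- The cyclic code `C_{(1,q+1,q²)} ⊆ F_q^{q+1}`, consisting of the vectors
`c(α,β)_i = α + Tr(β·γ^{(q−1)i})` for `α ∈ F_q`, `β ∈ F_{q²}`. -/
noncomputable def code (q : ℕ) (F : Type) {K : Type} [Field F] [Fintype F] [Field K]
    [Fintype K] [Algebra F K] (γ : Kˣ) : Finset (Fin (q + 1) → F) :=
  Finset.image (fun p : F × K => fun i : Fin (q + 1) => p.1 + cw q F γ p.2 i) Finset.univ

set_option linter.all false
section aux
variable {q : ℕ} {F K : Type} [Field F] [Fintype F] [Field K] [Fintype K] [Algebra F K]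

noncomputable def gg (q : ℕ) {K : Type} [Field K] (γ : Kˣ) (i : Fin (q+1)) : K :=
  (γ : K) ^ ((q - 1) * (i : ℕ))

theorem gg_eq (hq : 2 ≤ q) (γ : Kˣ) (i : Fin (q+1)) :
    (γ : K) ^ (((q : ℤ) - 1) * ((i : ℕ) : ℤ)) = gg q γ i := by
  have : ((q : ℤ) - 1) * ((i : ℕ) : ℤ) = (((q - 1) * (i : ℕ) : ℕ) : ℤ) := by
    push_cast [Nat.cast_sub (by omega : 1 ≤ q)]; ring
  rw [this, zpow_natCast]; rfl

theorem hq2 (hF : Fintype.card F = q) : 2 ≤ q := by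
  rw [← hF]; exact Fintype.one_lt_card

theorem ord (hK : Fintype.card K = q ^ 2) (γ : Kˣ) (hγ : ∀ x : Kˣ, x ∈ Subgroup.zpowers γ) :
    orderOf γ = (q - 1) * (q + 1) := by
  rw [orderOf_eq_card_of_forall_mem_zpowers hγ, Nat.card_eq_fintype_card, Fintype.card_units, hK]
  rw [mul_comm, ← Nat.sq_sub_sq, one_pow]

theorem gg_inj (hq : 2 ≤ q) (hK : Fintype.card K = q ^ 2) (γ : Kˣ)
    (hγ : ∀ x : Kˣ, x ∈ Subgroup.zpowers γ) : Function.Injective (gg q γ) := by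
  intro i j h
  have h1 : γ ^ ((q - 1) * (i : ℕ)) = γ ^ ((q - 1) * (j : ℕ)) := by
    ext; simpa [gg] using h
  have hp : 0 < q - 1 := by omega
  have := pow_injOn_Iio_orderOf (x := γ) (x₁ := (q - 1) * (i : ℕ)) (x₂ := (q - 1) * (j : ℕ))
    (by rw [ord hK γ hγ]; exact Nat.mul_lt_mul_of_pos_left i.2 hp)
    (by rw [ord hK γ hγ]; exact Nat.mul_lt_mul_of_pos_left j.2 hp) h1
  exact Fin.ext (Nat.eq_of_mul_eq_mul_left hp this)

theorem gg_ne (γ : Kˣ) (i : Fin (q+1)) : gg q γ i ≠ 0 := pow_ne_zero _ γ.ne_zero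

theorem gam_pow (hq : 2 ≤ q) (hK : Fintype.card K = q ^ 2) (x : K) : x ^ (q * q) = x := by
  rw [← sq, ← hK]; exact FiniteField.pow_card x

theorem gg_pow (hq : 2 ≤ q) (hK : Fintype.card K = q ^ 2) (γ : Kˣ) (i : Fin (q+1)) :
    gg q γ i * gg q γ i ^ q = 1 := by
  rw [← pow_succ', gg, ← pow_mul]
  have : (γ : K) ^ (q ^ 2 - 1) = 1 := by
    rw [← hK]; exact FiniteField.pow_card_sub_one_eq_one _ γ.ne_zero
  have e : (q - 1) * (i : ℕ) * (q + 1) = (q ^ 2 - 1) * i := by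
    have : q ^ 2 - 1 = (q + 1) * (q - 1) := by rw [← Nat.sq_sub_sq, one_pow]
    rw [this]; ring
  rw [e, pow_mul, this, one_pow]

theorem gg_surj (hq : 2 ≤ q) (hK : Fintype.card K = q ^ 2) (γ : Kˣ)
    (hγ : ∀ x : Kˣ, x ∈ Subgroup.zpowers γ) (u : K) (hu : u * u ^ q = 1) :
    ∃ i, gg q γ i = u := by
  have hu0 : u ≠ 0 := by rintro rfl; simp at hu
  obtain ⟨k, hk⟩ := (mem_powers_iff_mem_zpowers (x := γ)).2 (hγ (Units.mk0 u hu0))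
  have hk' : γ ^ k = Units.mk0 u hu0 := hk
  have hk2 : (γ : K) ^ k = u := by
    have := congrArg Units.val hk'; simpa using this
  have h1 : γ ^ (k * (q + 1)) = 1 := by
    ext; push_cast; rw [pow_mul, hk2, pow_succ', hu]
  have h2 := orderOf_dvd_of_pow_eq_one h1
  rw [ord hK γ hγ] at h2
  obtain ⟨m, rfl⟩ := Nat.dvd_of_mul_dvd_mul_right (by omega) h2
  refine ⟨⟨m % (q + 1), Nat.mod_lt _ (by omega)⟩, ?_⟩
  have h3 : γ ^ ((q - 1) * (m % (q + 1))) = γ ^ ((q - 1) * m) := by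
    rw [pow_eq_pow_iff_modEq, ord hK γ hγ]
    exact (Nat.mod_modEq m (q+1)).mul_left' _
  have h4 := congrArg Units.val h3
  push_cast at h4
  rw [gg, ← hk2]; exact h4

noncomputable def wd (q : ℕ) (F : Type) {K : Type} [Field F] [Field K] [Algebra F K]
    (γ : Kˣ) (a : F) (b : K) : Fin (q + 1) → F := fun i => a + cw q F γ b i

theorem wd_zero (hq : 2 ≤ q) (hK : Fintype.card K = q ^ 2) (γ : Kˣ)
    (htr : ∀ x : K, algebraMap F K (Algebra.trace F K x) = x + x ^ q) (a : F) (b : K)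
    (i : Fin (q+1)) : wd q F γ a b i = 0 ↔
      b * gg q γ i ^ 2 + algebraMap F K a * gg q γ i + b ^ q = 0 := by
  rw [← (algebraMap F K).injective.eq_iff]
  simp only [wd, cw, gg_eq hq, map_add, htr, map_zero, mul_pow]
  have h := gg_pow hq hK γ i
  have h0 := gg_ne γ i
  rw [← mul_left_inj' h0, zero_mul]
  have : (algebraMap F K a + (b * gg q γ i + b ^ q * gg q γ i ^ q)) * gg q γ i =
    b * gg q γ i ^ 2 + algebraMap F K a * gg q γ i + b ^ q := by
    linear_combination b ^ q * h
  rw [this]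

theorem zeros (hq : 2 ≤ q) (hK : Fintype.card K = q ^ 2) (γ : Kˣ)
    (hγ : ∀ x : Kˣ, x ∈ Subgroup.zpowers γ)
    (htr : ∀ x : K, algebraMap F K (Algebra.trace F K x) = x + x ^ q) (a : F) (b : K)
    (hb : b ≠ 0) (i j k : Fin (q+1)) (hi : wd q F γ a b i = 0)
    (hij : gg q γ i * gg q γ j * b = b ^ q) :
    wd q F γ a b k = 0 ↔ k = i ∨ k = j := by
  rw [wd_zero hq hK γ htr] at hi ⊢
  have h0 := gg_ne γ i
  have ha : algebraMap F K a = - b * (gg q γ i + gg q γ j) := by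
    apply mul_right_cancel₀ h0
    linear_combination hi + hij
  have : b * gg q γ k ^ 2 + algebraMap F K a * gg q γ k + b ^ q =
    b * ((gg q γ k - gg q γ i) * (gg q γ k - gg q γ j)) := by
    rw [ha, ← hij]; ring
  rw [this, mul_eq_zero, mul_eq_zero, sub_eq_zero, sub_eq_zero,
    (gg_inj hq hK γ hγ).eq_iff, (gg_inj hq hK γ hγ).eq_iff]
  simp [hb]

theorem partner (hq : 2 ≤ q) (hK : Fintype.card K = q ^ 2) (γ : Kˣ)
    (hγ : ∀ x : Kˣ, x ∈ Subgroup.zpowers γ) (b : K) (hb : b ≠ 0) (i : Fin (q+1)) :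
    ∃ j, gg q γ i * gg q γ j * b = b ^ q := by
  have h0 := gg_ne γ i
  obtain ⟨j, hj⟩ := gg_surj hq hK γ hγ (b ^ q / (gg q γ i * b)) (by
    have h := gg_pow hq hK γ i
    rw [div_pow, mul_pow, ← pow_mul, gam_pow hq hK]
    have hbq : b ^ q ≠ 0 := pow_ne_zero _ hb
    have hgq : gg q γ i ^ q ≠ 0 := pow_ne_zero _ h0
    rw [div_mul_div_comm, div_eq_one_iff_eq (by positivity)]
    linear_combination -b * b ^ q * h)
  refine ⟨j, ?_⟩
  rw [hj]; field_simp

theorem hwt_add (v : Fin (q+1) → F) :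
    (Finset.univ.filter (fun i => v i = 0)).card + hwt v = q + 1 := by
  have := Finset.card_filter_add_card_filter_not (s := (Finset.univ : Finset (Fin (q+1))))
    (fun i => v i = 0)
  simpa [hwt] using this

theorem hwt_pair (hq : 2 ≤ q) (hK : Fintype.card K = q ^ 2) (γ : Kˣ)
    (hγ : ∀ x : Kˣ, x ∈ Subgroup.zpowers γ)
    (htr : ∀ x : K, algebraMap F K (Algebra.trace F K x) = x + x ^ q) (a : F) (b : K)
    (hb : b ≠ 0) (i j : Fin (q+1)) (hi : wd q F γ a b i = 0)
    (hij : gg q γ i * gg q γ j * b = b ^ q) :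
    hwt (wd q F γ a b) = if i = j then q else q - 1 := by
  have h := hwt_add (wd q F γ a b)
  have : (Finset.univ.filter (fun k => wd q F γ a b k = 0)) = {i, j} := by
    ext k; simp [zeros hq hK γ hγ htr a b hb i j k hi hij]
  rw [this] at h
  split_ifs with e
  · subst e; simp at h; omega
  · rw [Finset.card_pair e] at h; omega

theorem wd_b0 (γ : Kˣ) (a : F) : wd q F γ a (0 : K) = fun _ => a := by
  ext i; simp [wd, cw]

theorem hwt_cases (hq : 2 ≤ q) (hK : Fintype.card K = q ^ 2) (γ : Kˣ)
    (hγ : ∀ x : Kˣ, x ∈ Subgroup.zpowers γ)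
    (htr : ∀ x : K, algebraMap F K (Algebra.trace F K x) = x + x ^ q) (a : F) (b : K) :
    (a = 0 ∧ b = 0) ∨ hwt (wd q F γ a b) = q + 1 ∨
    (b ≠ 0 ∧ ∃ i j, wd q F γ a b i = 0 ∧ gg q γ i * gg q γ j * b = b ^ q) := by
  by_cases hz : ∃ i, wd q F γ a b i = 0
  · obtain ⟨i, hi⟩ := hz
    by_cases hb : b = 0
    · subst hb; rw [wd_b0] at hi; exact Or.inl ⟨hi, rfl⟩
    · obtain ⟨j, hj⟩ := partner hq hK γ hγ b hb i
      exact Or.inr (Or.inr ⟨hb, i, j, hi, hj⟩)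
  · push Not at hz
    right; left
    have h := hwt_add (wd q F γ a b)
    simpa [hz] using h

theorem wd_inj (hq : 2 ≤ q) (hK : Fintype.card K = q ^ 2) (γ : Kˣ)
    (hγ : ∀ x : Kˣ, x ∈ Subgroup.zpowers γ)
    (htr : ∀ x : K, algebraMap F K (Algebra.trace F K x) = x + x ^ q) (a a' : F) (b b' : K)
    (h : wd q F γ a b = wd q F γ a' b') : a = a' ∧ b = b' := by
  have h0 : wd q F γ (a - a') (b - b') = 0 := by
    ext i
    have := congrFun h i
    simp only [wd, cw] at this
    simp only [wd, cw, sub_mul b b', map_sub, Pi.zero_apply]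
    linear_combination this
  have hw : hwt (wd q F γ (a - a') (b - b')) = 0 := by rw [h0]; simp [hwt]
  rcases hwt_cases hq hK γ hγ htr (a - a') (b - b') with h1 | h1 | ⟨hb, i, j, hi, hj⟩
  · exact ⟨sub_eq_zero.1 h1.1, sub_eq_zero.1 h1.2⟩
  · omega
  · have := hwt_pair hq hK γ hγ htr _ _ hb i j hi hj
    split_ifs at this <;> omega

theorem mem_code (γ : Kˣ) (v : Fin (q+1) → F) :
    v ∈ code q F γ ↔ ∃ a b, wd q F γ a b = v := by
  simp only [code, Finset.mem_image, Finset.mem_univ, true_and, Prod.exists]; rfl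

theorem exists_fix (htr : ∀ x : K, algebraMap F K (Algebra.trace F K x) = x + x ^ q)
    (t : K) (ht : t ^ q = t) : ∃ s : F, algebraMap F K s = t := by
  obtain ⟨s, hs⟩ := Algebra.trace_surjective F K 1
  refine ⟨Algebra.trace F K (t * s), ?_⟩
  have := htr s
  rw [hs, map_one] at this
  rw [htr, mul_pow, ht, ← mul_add, ← this, mul_one]

/-- The codewords of weight `q`, parametrised. -/
noncomputable def par (q : ℕ) (F : Type) {K : Type} [Field F] [Field K] [Algebra F K]
    (γ : Kˣ) (p : Fin (q+1) × Fˣ) : Fin (q+1) → F :=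
  wd q F γ (- cw q F γ (algebraMap F K p.2 * γ ^ (2 * (p.1 : ℕ))) p.1)
    (algebraMap F K p.2 * γ ^ (2 * (p.1 : ℕ)))

theorem par_zero (γ : Kˣ) (p : Fin (q+1) × Fˣ) : par q F γ p p.1 = 0 := by
  simp [par, wd]

theorem par_ne (γ : Kˣ) (i : Fin (q+1)) (t : Fˣ) :
    algebraMap F K t * γ ^ (2 * (i : ℕ)) ≠ 0 := by simp

theorem gg_gam (hq : 2 ≤ q) (γ : Kˣ) (i : Fin (q+1)) :
    gg q γ i * γ ^ (i : ℕ) = (γ ^ (i : ℕ) : K) ^ q := by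
  rw [gg, ← pow_add, ← pow_mul]
  congr 1
  obtain ⟨n, rfl⟩ : ∃ n, q = n + 1 := ⟨q - 1, by omega⟩
  simp; ring

theorem par_rel (hq : 2 ≤ q) (hF : Fintype.card F = q) (γ : Kˣ) (i : Fin (q+1)) (t : Fˣ) :
    gg q γ i * gg q γ i * (algebraMap F K t * γ ^ (2 * (i : ℕ))) =
      (algebraMap F K t * γ ^ (2 * (i : ℕ))) ^ q := by
  have h1 := gg_gam hq γ i
  have h2 : algebraMap F K (t : F) ^ q = algebraMap F K t := by
    rw [← map_pow, ← hF, FiniteField.pow_card]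
  rw [mul_pow, h2, mul_comm 2 (i : ℕ), pow_mul, ← pow_mul _ 2 q, mul_comm 2 q, pow_mul _ q 2,
    ← h1]
  ring

end aux

theorem code_three_weights
    (q : ℕ) (F K : Type) [Field F] [Fintype F] [Field K] [Fintype K] [Algebra F K]
    (hF : Fintype.card F = q) (hK : Fintype.card K = q ^ 2)
    (γ : Kˣ) (hγ : ∀ x : Kˣ, x ∈ Subgroup.zpowers γ)
    (htr : ∀ x : K, algebraMap F K (Algebra.trace F K x) = x + x ^ q) :
    (code q F γ).card = q ^ 3 ∧
    (∀ v ∈ code q F γ, v ≠ 0 → hwt v = q - 1 ∨ hwt v = q ∨ hwt v = q + 1) ∧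
    (∃ v ∈ code q F γ, hwt v = q - 1) ∧
    (∃ v ∈ code q F γ, hwt v = q) ∧
    (∃ v ∈ code q F γ, hwt v = q + 1) ∧
    (Finset.filter (fun v => hwt v = q) (code q F γ)).card = q ^ 2 - 1 := by
  have hq : 2 ≤ q := hq2 hF
  have hpar : ∀ p, hwt (par q F γ p) = q := by
    intro p
    have := hwt_pair hq hK γ hγ htr _ _ (par_ne γ p.1 p.2) p.1 p.1 (par_zero γ p)
      (par_rel hq hF γ p.1 p.2)
    rw [if_pos rfl] at this
    exact this
  refine ⟨?_, ?_, ?_, ?_, ?_, ?_⟩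
  · rw [code, Finset.card_image_of_injective]
    · rw [Finset.card_univ, Fintype.card_prod, hF, hK]; ring
    · intro p p' h
      have := wd_inj hq hK γ hγ htr p.1 p'.1 p.2 p'.2 h
      exact Prod.ext this.1 this.2
  · intro v hv hv0
    obtain ⟨a, b, rfl⟩ := (mem_code γ v).1 hv
    rcases hwt_cases hq hK γ hγ htr a b with h1 | h1 | ⟨hb, i, j, hi, hj⟩
    · exfalso; apply hv0; rw [h1.1, h1.2, wd_b0]; rfl
    · exact Or.inr (Or.inr h1)
    · have := hwt_pair hq hK γ hγ htr _ _ hb i j hi hj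
      split_ifs at this
      · exact Or.inr (Or.inl this)
      · exact Or.inl this
  · let i0 : Fin (q+1) := ⟨0, by omega⟩
    let i1 : Fin (q+1) := ⟨1, by omega⟩
    refine ⟨wd q F γ (- cw q F γ (γ : K) i0) γ, (mem_code γ _).2 ⟨_, _, rfl⟩, ?_⟩
    have := hwt_pair hq hK γ hγ htr (- cw q F γ (γ : K) i0) γ γ.ne_zero i0 i1 (by simp [wd]) (by
      have := gg_gam hq γ i1
      have e : gg q γ i0 = 1 := by simp [gg, i0]
      rw [e, one_mul]
      simpa [i1] using this)
    rw [this, if_neg (by simp [i0, i1])]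
  · exact ⟨par q F γ (0, 1), (mem_code γ _).2 ⟨_, _, rfl⟩, hpar _⟩
  · refine ⟨wd q F γ 1 (0 : K), (mem_code γ _).2 ⟨_, _, rfl⟩, ?_⟩
    rw [wd_b0]; simp [hwt]
  · have himg : Finset.filter (fun v => hwt v = q) (code q F γ) =
        Finset.univ.image (par q F γ) := by
      ext v
      simp only [Finset.mem_filter, Finset.mem_image, Finset.mem_univ, true_and]
      constructor
      · rintro ⟨hv, hw⟩
        obtain ⟨a, b, rfl⟩ := (mem_code γ v).1 hv
        rcases hwt_cases hq hK γ hγ htr a b with h1 | h1 | ⟨hb, i, j, hi, hj⟩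
        · rw [h1.1, h1.2, wd_b0] at hw
          simp [hwt] at hw; omega
        · omega
        · have h2 := hwt_pair hq hK γ hγ htr _ _ hb i j hi hj
          split_ifs at h2 with e
          swap
          · omega
          subst e
          have hy : (γ : K) ^ (i : ℕ) ≠ 0 := pow_ne_zero _ γ.ne_zero
          have hg := gg_gam hq γ i
          obtain ⟨t, ht⟩ := exists_fix (F := F) htr (b / (γ ^ (i : ℕ)) ^ 2) (by
            rw [div_pow, ← hj, ← pow_mul, mul_comm 2 q, pow_mul, ← hg]
            have := gg_ne γ i
            field_simp)
          have ht0 : t ≠ 0 := by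
            rintro rfl
            rw [map_zero, eq_comm, div_eq_zero_iff] at ht
            rcases ht with h | h
            · exact hb h
            · exact pow_ne_zero _ hy h
          refine ⟨(i, Units.mk0 t ht0), ?_⟩
          have hbe : algebraMap F K t * γ ^ (2 * (i : ℕ)) = b := by
            rw [ht, mul_comm 2, pow_mul]; field_simp
          simp only [par, Units.val_mk0, hbe]
          congr 1
          simp only [wd] at hi
          linear_combination -hi
      · rintro ⟨p, rfl⟩
        exact ⟨(mem_code γ _).2 ⟨_, _, rfl⟩, hpar p⟩
    rw [himg, Finset.card_image_of_injective]
    · rw [Finset.card_univ, Fintype.card_prod, Fintype.card_units, hF, Fintype.card_fin,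
        ← Nat.sq_sub_sq, one_pow]
    · rintro ⟨i, t⟩ ⟨i', t'⟩ h
      have h1 := par_zero γ (i', t')
      rw [← h] at h1
      have h2 := (zeros hq hK γ hγ htr _ _ (par_ne γ i t) i i i' (par_zero γ (i, t))
        (par_rel hq hF γ i t)).1 h1
      have e : i' = i := by tauto
      subst e
      have h3 := (wd_inj hq hK γ hγ htr _ _ _ _ h).2
      have h4 := mul_right_cancel₀ (pow_ne_zero _ γ.ne_zero) h3
      have h5 := (algebraMap F K).injective h4
      exact Prod.ext rfl (Units.ext h5)
end

section
/- In the code C_{(1,q+1,q^2)}, the number of codewords of Hamming weight q−1 is q(q²−1)/2, the number of codewords of Hamming weight q is q²−1, the number of codewords of Hamming weight q+1 is q(q−1)²/2, and together with the zero codeword these account for all q³ codewords (so the minimum Hamming distance of the code is q−1). -/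
open scoped Classical

section aux
variable (q : ℕ) (F : Type) {K : Type} [Field F] [Fintype F] [Field K] [Fintype K] [Algebra F K]

/-- evaluation points -/
noncomputable def upt (γ : Kˣ) (i : Fin (q+1)) : K := (γ : K) ^ (((q : ℤ) - 1) * ((i : ℕ) : ℤ))

/-- codeword -/
noncomputable def cww (γ : Kˣ) (p : F × K) : Fin (q+1) → F :=
  fun i : Fin (q + 1) => p.1 + cw q F γ p.2 i

/-- zero count -/
noncomputable def zc (γ : Kˣ) (p : F × K) : ℕ :=
  (Finset.univ.filter (fun i : Fin (q+1) => cww q F γ p i = 0)).card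

variable {q F}

lemma q_gt (hF : Fintype.card F = q) : 1 < q := hF ▸ Fintype.one_lt_card

lemma gam_order (hK : Fintype.card K = q ^ 2)
    (γ : Kˣ) (hγ : ∀ x : Kˣ, x ∈ Subgroup.zpowers γ) : orderOf γ = q ^ 2 - 1 := by
  rw [orderOf_eq_card_of_forall_mem_zpowers hγ, Nat.card_units, Nat.card_eq_fintype_card, hK]

lemma upt_eq (γ : Kˣ) (i : Fin (q+1)) :
    upt q γ i = ((γ ^ (((q : ℤ) - 1) * ((i : ℕ) : ℤ)) : Kˣ) : K) := by
  simp [upt]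

lemma upt_inj (hq : 1 < q) (hK : Fintype.card K = q ^ 2)
    (γ : Kˣ) (hγ : ∀ x : Kˣ, x ∈ Subgroup.zpowers γ) : Function.Injective (upt q γ) := by
  intro i j h
  rw [upt_eq, upt_eq] at h
  have h := Units.ext h
  rw [zpow_eq_zpow_iff_modEq, gam_order hK γ hγ, Int.modEq_iff_dvd] at h
  have e : ((q ^ 2 - 1 : ℕ) : ℤ) = ((q:ℤ) - 1) * (q + 1) := by
    rw [Nat.cast_sub (Nat.one_le_pow _ _ (by omega))]; push_cast; ring
  rw [e, ← mul_sub] at h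
  have h := Int.dvd_of_mul_dvd_mul_left (by omega) h
  have hi := i.2
  have hj := j.2
  have := Int.eq_zero_of_abs_lt_dvd h (by rw [abs_lt]; omega)
  ext
  omega

lemma upt_pow (hq : 1 < q) (hK : Fintype.card K = q ^ 2)
    (γ : Kˣ) (hγ : ∀ x : Kˣ, x ∈ Subgroup.zpowers γ) (i) : upt q γ i ^ q * upt q γ i = 1 := by
  rw [← pow_succ, upt_eq, ← Units.val_pow_eq_pow_val, ← zpow_natCast, ← zpow_mul]
  have e : ((q ^ 2 - 1 : ℕ) : ℤ) = ((q:ℤ) - 1) * (q + 1) := by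
    rw [Nat.cast_sub (Nat.one_le_pow _ _ (by omega))]; push_cast; ring
  have : ((q : ℤ) - 1) * ((i : ℕ) : ℤ) * ((q + 1 : ℕ) : ℤ) = ((orderOf γ : ℕ) : ℤ) * (i : ℕ) := by
    rw [gam_order hK γ hγ, e]; push_cast; ring
  rw [this, zpow_mul, zpow_natCast γ, pow_orderOf_eq_one]; simp

lemma zc_le (hq : 1 < q) (hK : Fintype.card K = q ^ 2)
    (γ : Kˣ) (hγ : ∀ x : Kˣ, x ∈ Subgroup.zpowers γ)
    (htr : ∀ x : K, algebraMap F K (Algebra.trace F K x) = x + x ^ q)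
    (p : F × K) (hp : p ≠ 0) : zc q F γ p ≤ 2 := by
  obtain ⟨a, b⟩ := p
  set P : Polynomial K := Polynomial.C b * Polynomial.X ^ 2 +
    Polynomial.C (algebraMap F K a) * Polynomial.X + Polynomial.C (b ^ q) with hP
  have hP0 : P ≠ 0 := by
    intro h
    apply hp
    have h2 : P.coeff 2 = 0 := by rw [h]; simp
    have h1 : P.coeff 1 = 0 := by rw [h]; simp
    simp [hP, Polynomial.coeff_X, Polynomial.coeff_C, -map_pow] at h1 h2
    simp [h1, h2]
  calc zc q F γ (a, b) ≤ P.roots.toFinset.card := by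
        apply Finset.card_le_card_of_injOn (upt q γ)
        · intro i hi
          replace hi := (Finset.mem_filter.1 (Finset.mem_coe.1 hi)).2
          simp only [cww, cw] at hi
          have h := congrArg (algebraMap F K) hi
          rw [map_add, htr, map_zero] at h
          simp only [Finset.mem_coe, Multiset.mem_toFinset, Polynomial.mem_roots hP0,
            Polynomial.IsRoot.def]
          simp only [hP, Polynomial.eval_add, Polynomial.eval_mul, Polynomial.eval_C,
            Polynomial.eval_pow, Polynomial.eval_X]
          have hu := upt_pow hq hK γ hγ i
          change algebraMap F K a + (b * upt q γ i + (b * upt q γ i) ^ q) = 0 at h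
          rw [mul_pow] at h
          linear_combination (upt q γ i) * h - b ^ q * hu
        · exact (upt_inj hq hK γ hγ).injOn
    _ ≤ P.roots.card := Multiset.toFinset_card_le _
    _ ≤ P.natDegree := Polynomial.card_roots' _
    _ ≤ 2 := Polynomial.natDegree_quadratic_le

lemma zc_zero (γ : Kˣ) : zc q F γ (0 : F × K) = q + 1 := by
  simp [zc, cww, cw]

lemma hwt_eq (γ : Kˣ) (p : F × K) : zc q F γ p + hwt (cww q F γ p) = q + 1 := by
  have := Finset.card_filter_add_card_filter_not (s := (Finset.univ : Finset (Fin (q+1))))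
    (fun i => cww q F γ p i = 0)
  simpa [zc, hwt] using this

lemma cww_inj (hq : 1 < q) (hK : Fintype.card K = q ^ 2)
    (γ : Kˣ) (hγ : ∀ x : Kˣ, x ∈ Subgroup.zpowers γ)
    (htr : ∀ x : K, algebraMap F K (Algebra.trace F K x) = x + x ^ q) :
    Function.Injective (cww q F γ) := by
  intro p r h
  by_contra hne
  have h1 := zc_le hq hK γ hγ htr (p - r) (sub_ne_zero.2 hne)
  have h2 : zc q F γ (p - r) = q + 1 := by
    have : ∀ i, cww q F γ (p - r) i = 0 := by
      intro i
      have := congrFun h i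
      simp only [cww, cw, Prod.fst_sub, Prod.snd_sub, sub_mul, map_sub] at this ⊢
      linear_combination this
    simp [zc, this]
  omega

lemma card_line (γ : Kˣ) (i : Fin (q+1)) :
    (Finset.univ.filter (fun p : F × K => cww q F γ p i = 0)).card = Fintype.card K := by
  rw [← Finset.card_univ]
  symm
  apply Finset.card_bij (fun b _ => (-(cw q F γ b i), b))
  · intro b _; rw [Finset.mem_filter]; simp [cww]
  · intro a _ b _ h; exact (Prod.ext_iff.1 h).2
  · rintro ⟨a, b⟩ h
    replace h := (Finset.mem_filter.1 h).2
    simp only [cww] at h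
    exact ⟨b, Finset.mem_univ _, by ext <;> simp; linear_combination -h⟩

lemma card_ker (hF : Fintype.card F = q) (hK : Fintype.card K = q ^ 2) (d : K) (hd : d ≠ 0) :
    (Finset.univ.filter (fun b : K => Algebra.trace F K (b * d) = 0)).card = q := by
  have hq := q_gt hF
  let f : K →ₗ[F] F := (Algebra.trace F K).comp (LinearMap.mulRight F d)
  have hs : Function.Surjective f := by
    intro y
    obtain ⟨x, hx⟩ := Algebra.trace_surjective F K y
    exact ⟨x * d⁻¹, by simp [f, hd, hx]⟩
  have h2 : Module.finrank F K = 2 := by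
    have := Module.card_eq_pow_finrank (K := F) (V := K)
    rw [hF, hK] at this
    exact (Nat.pow_right_injective hq this).symm
  have h3 := f.finrank_range_add_finrank_ker
  rw [LinearMap.range_eq_top.2 hs, finrank_top, Module.finrank_self, h2] at h3
  have h4 := Module.card_eq_pow_finrank (K := F) (V := LinearMap.ker f)
  rw [show Module.finrank F (LinearMap.ker f) = 1 by omega, hF, pow_one] at h4
  rw [← h4, ← Fintype.card_coe]
  exact Fintype.card_congr (Equiv.subtypeEquivRight (by intro x; simp [f]))

lemma card_pair (hF : Fintype.card F = q) (hK : Fintype.card K = q ^ 2)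
    (γ : Kˣ) (hγ : ∀ x : Kˣ, x ∈ Subgroup.zpowers γ) (i j : Fin (q+1)) (hij : i ≠ j) :
    (Finset.univ.filter (fun p : F × K => cww q F γ p i = 0 ∧ cww q F γ p j = 0)).card = q := by
  have hd : upt q γ i - upt q γ j ≠ 0 :=
    sub_ne_zero.2 (fun h => hij (upt_inj (q_gt hF) hK γ hγ h))
  refine Eq.trans (Eq.symm ?_) (card_ker hF hK _ hd)
  apply Finset.card_bij (fun b _ => (-(cw q F γ b i), b))
  · intro b h
    simp only [Finset.mem_filter, Finset.mem_univ, true_and, mul_sub, map_sub] at h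
    refine Finset.mem_filter.2 ⟨Finset.mem_univ _, by simp [cww], ?_⟩
    change -(Algebra.trace F K (b * upt q γ i)) + Algebra.trace F K (b * upt q γ j) = 0
    linear_combination -h
  · intro a _ b _ h; exact (Prod.ext_iff.1 h).2
  · rintro ⟨a, b⟩ h
    replace h := (Finset.mem_filter.1 h).2
    simp only [cww] at h
    refine ⟨b, ?_, by ext <;> simp; linear_combination -h.1⟩
    simp only [Finset.mem_filter, Finset.mem_univ, true_and, mul_sub, map_sub]
    obtain ⟨h1, h2⟩ := h
    change a + Algebra.trace F K (b * upt q γ i) = 0 at h1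
    change a + Algebra.trace F K (b * upt q γ j) = 0 at h2
    linear_combination h1 - h2

lemma sum1 (hK : Fintype.card K = q ^ 2) (γ : Kˣ) :
    ∑ p : F × K, zc q F γ p = (q + 1) * q ^ 2 := by
  simp only [zc, Finset.card_filter]
  rw [Finset.sum_comm]
  simp only [← Finset.card_filter, card_line, hK]
  simp

lemma sum2 (hF : Fintype.card F = q) (hK : Fintype.card K = q ^ 2)
    (γ : Kˣ) (hγ : ∀ x : Kˣ, x ∈ Subgroup.zpowers γ) :
    ∑ p : F × K, zc q F γ p * zc q F γ p = (q + 1) * (q ^ 2 + q * q) := by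
  have : ∀ p : F × K, zc q F γ p * zc q F γ p = ∑ i : Fin (q+1), ∑ j : Fin (q+1),
      if cww q F γ p i = 0 ∧ cww q F γ p j = 0 then 1 else 0 := by
    intro p
    simp only [zc, Finset.card_filter, Finset.sum_mul_sum]
    refine Finset.sum_congr rfl fun i _ => Finset.sum_congr rfl fun j _ => ?_
    by_cases h1 : cww q F γ p i = 0 <;> by_cases h2 : cww q F γ p j = 0 <;> simp [h1, h2]
  simp only [this]
  rw [Finset.sum_comm]
  have h : ∀ i : Fin (q+1), ∑ p : F × K, ∑ j : Fin (q+1),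
      (if cww q F γ p i = 0 ∧ cww q F γ p j = 0 then 1 else 0) = q ^ 2 + q * q := by
    intro i
    rw [Finset.sum_comm]
    simp only [← Finset.card_filter]
    rw [← Finset.add_sum_erase _ _ (Finset.mem_univ i)]
    congr 1
    · simp only [and_self]; rw [card_line, hK]
    · rw [Finset.sum_congr rfl (fun j hj => card_pair hF hK γ hγ i j (Finset.ne_of_mem_erase hj).symm)]
      simp
  rw [Finset.sum_congr rfl (fun i _ => h i)]
  simp

lemma filt (hF : Fintype.card F = q) (hK : Fintype.card K = q ^ 2)
    (γ : Kˣ) (hγ : ∀ x : Kˣ, x ∈ Subgroup.zpowers γ)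
    (htr : ∀ x : K, algebraMap F K (Algebra.trace F K x) = x + x ^ q) (k : ℕ) (hk : k ≤ 2)  :
    (Finset.filter (fun v => hwt v = q + 1 - k) (code q F γ)).card =
      ∑ p ∈ Finset.univ.erase (0 : F × K), if zc q F γ p = k then 1 else 0 := by
  have hq := q_gt hF
  change (Finset.filter (fun v => hwt v = q + 1 - k)
    (Finset.image (cww q F γ) Finset.univ)).card = _
  rw [Finset.filter_image, Finset.card_image_of_injective _ (cww_inj hq hK γ hγ htr),
    ← Finset.card_filter]
  congr 1
  ext p
  have h1 := hwt_eq (q := q) γ p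
  simp only [Finset.mem_filter, Finset.mem_univ, Finset.mem_erase, true_and, and_true]
  constructor
  · intro h
    refine ⟨?_, by omega⟩
    rintro rfl
    have := zc_zero (q := q) (F := F) γ
    omega
  · rintro ⟨_, h⟩; omega

end aux

/-- The weight distribution of `C_{(1,q+1,q²)}`: there are `q(q²−1)/2` codewords of
weight `q−1`, `q²−1` codewords of weight `q`, `q(q−1)²/2` codewords of weight `q+1`,
and together with the zero codeword these account for all `q³` codewords (so the
minimum Hamming distance is `q−1`). -/
theorem code_weight_distribution
    (q : ℕ) (F K : Type) [Field F] [Fintype F] [Field K] [Fintype K] [Algebra F K]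
    (hF : Fintype.card F = q) (hK : Fintype.card K = q ^ 2)
    (γ : Kˣ) (hγ : ∀ x : Kˣ, x ∈ Subgroup.zpowers γ)
    (htr : ∀ x : K, algebraMap F K (Algebra.trace F K x) = x + x ^ q) :
    ((Finset.filter (fun v => hwt v = q - 1) (code q F γ)).card : ℚ)
        = q * ((q : ℚ) ^ 2 - 1) / 2 ∧
    (Finset.filter (fun v => hwt v = q) (code q F γ)).card = q ^ 2 - 1 ∧
    ((Finset.filter (fun v => hwt v = q + 1) (code q F γ)).card : ℚ)
        = q * ((q : ℚ) - 1) ^ 2 / 2 ∧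
    1 + (Finset.filter (fun v => hwt v = q - 1) (code q F γ)).card
      + (Finset.filter (fun v => hwt v = q) (code q F γ)).card
      + (Finset.filter (fun v => hwt v = q + 1) (code q F γ)).card
      = (code q F γ).card ∧
    (code q F γ).card = q ^ 3 ∧
    (∀ v ∈ code q F γ, v ≠ 0 → q - 1 ≤ hwt v) ∧
    (∃ v ∈ code q F γ, hwt v = q - 1) := by
  have hq := q_gt hF
  have f2 := filt hF hK γ hγ htr 2 (by norm_num)
  have f1 := filt hF hK γ hγ htr 1 (by norm_num)
  have f0 := filt hF hK γ hγ htr 0 (by norm_num)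
  rw [show q + 1 - 2 = q - 1 by omega] at f2
  rw [show q + 1 - 1 = q by omega] at f1
  rw [show q + 1 - 0 = q + 1 by omega] at f0
  have s1 := sum1 (F := F) hK γ
  have s2 := sum2 hF hK γ hγ
  have hz := zc_zero (q := q) (F := F) γ
  have hle := zc_le hq hK γ hγ htr
  have hcard : (code q F γ).card = q ^ 3 := by
    change (Finset.image (cww q F γ) Finset.univ).card = _
    rw [Finset.card_image_of_injective _ (cww_inj hq hK γ hγ htr), Finset.card_univ,
      Fintype.card_prod, hF, hK]
    ring
  rw [← Finset.add_sum_erase _ _ (Finset.mem_univ (0 : F × K)), hz] at s1 s2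
  have e0 : (∑ p ∈ Finset.univ.erase (0 : F × K), 1) + 1 = q ^ 3 := by
    rw [Finset.sum_const, smul_eq_mul, mul_one, Finset.card_erase_add_one (Finset.mem_univ _),
      Finset.card_univ, Fintype.card_prod, hF, hK]
    ring
  set A2 := (Finset.filter (fun v => hwt v = q - 1) (code q F γ)).card
  set A1 := (Finset.filter (fun v => hwt v = q) (code q F γ)).card
  set A0 := (Finset.filter (fun v => hwt v = q + 1) (code q F γ)).card
  have g0 : ∑ p ∈ Finset.univ.erase (0 : F × K), 1 = A0 + A1 + A2 := by
    rw [f0, f1, f2, ← Finset.sum_add_distrib, ← Finset.sum_add_distrib]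
    refine Finset.sum_congr rfl fun p hp => ?_
    have := hle p (Finset.ne_of_mem_erase hp)
    interval_cases zc q F γ p <;> simp
  have g1 : ∑ p ∈ Finset.univ.erase (0 : F × K), zc q F γ p = A1 + 2 * A2 := by
    rw [f1, f2, Finset.mul_sum, ← Finset.sum_add_distrib]
    refine Finset.sum_congr rfl fun p hp => ?_
    have := hle p (Finset.ne_of_mem_erase hp)
    interval_cases zc q F γ p <;> simp
  have g2 : ∑ p ∈ Finset.univ.erase (0 : F × K), zc q F γ p * zc q F γ p = A1 + 4 * A2 := by
    rw [f1, f2, Finset.mul_sum, ← Finset.sum_add_distrib]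
    refine Finset.sum_congr rfl fun p hp => ?_
    have := hle p (Finset.ne_of_mem_erase hp)
    interval_cases zc q F γ p <;> simp
  rw [g0] at e0
  rw [g1] at s1
  rw [g2] at s2
  have E0 : ((A0 : ℚ) + A1 + A2) + 1 = q ^ 3 := by exact_mod_cast e0
  have E1 : ((q : ℚ) + 1) + (A1 + 2 * A2) = (q + 1) * q ^ 2 := by exact_mod_cast s1
  have E2 : ((q : ℚ) + 1) * (q + 1) + (A1 + 4 * A2) = (q + 1) * (q ^ 2 + q * q) := by
    exact_mod_cast s2
  have R2 : (A2 : ℚ) = q * ((q : ℚ) ^ 2 - 1) / 2 := by linear_combination (E2 - E1) / 2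
  have R1 : (A1 : ℚ) = (q : ℚ) ^ 2 - 1 := by linear_combination 2 * E1 - E2
  refine ⟨R2, ?_, ?_, by omega, hcard, ?_, ?_⟩
  · have : A1 + 1 = q ^ 2 := by
      have : (A1 : ℚ) + 1 = q ^ 2 := by linear_combination R1
      exact_mod_cast this
    omega
  · linear_combination E0 - R1 - R2
  · intro v hv hv0
    change v ∈ Finset.image (cww q F γ) Finset.univ at hv
    obtain ⟨p, -, rfl⟩ := Finset.mem_image.1 hv
    have hp : p ≠ 0 := by
      rintro rfl
      apply hv0
      ext i
      simp [cww, cw]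
    have := hle p hp
    have := hwt_eq (q := q) γ p
    omega
  · have hpos : 0 < A2 := by
      have hq' : (1 : ℚ) < q := by exact_mod_cast hq
      have : (0 : ℚ) < A2 := by
        rw [R2]
        have : (0 : ℚ) < (q : ℚ) ^ 2 - 1 := by nlinarith
        positivity
      exact_mod_cast this
    obtain ⟨v, hv⟩ := Finset.card_pos.1 hpos
    exact ⟨v, (Finset.mem_filter.1 hv).1, (Finset.mem_filter.1 hv).2⟩
end

section
/- Suppose q ≠ 2. Then the dual code C_{(1,q+1,q^2)}^⊥ has exactly q^{q−2} codewords and its minimum Hamming distance is 4; that is, every nonzero codeword of C_{(1,q+1,q^2)}^⊥ has Hamming weight at least 4, and some codeword has Hamming weight exactly 4. -/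
open scoped Classical

/-- The dual code `C_{(1,q+1,q²)}^⊥ = {v ∈ F_q^{q+1} : ∑ i, v i · c i = 0 for all
`c ∈ C_{(1,q+1,q²)}`}`. -/
noncomputable def dualCode (q : ℕ) (F : Type) {K : Type} [Field F] [Fintype F] [Field K]
    [Fintype K] [Algebra F K] (γ : Kˣ) : Finset (Fin (q + 1) → F) :=
  Finset.filter (fun v => ∀ c ∈ code q F γ, ∑ i, v i * c i = 0) Finset.univ

noncomputable def synd {n : ℕ} (F : Type) {K : Type} [Field F] [Field K] [Algebra F K]
    (x : Fin n → K) : (Fin n → F) →ₗ[F] F × K where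
  toFun v := (∑ i, v i, ∑ i, v i • x i)
  map_add' u v := by simp [Finset.sum_add_distrib, add_smul]
  map_smul' a v := by simp [Finset.mul_sum, Finset.smul_sum, mul_smul]

lemma three_aux {q : ℕ} {F K : Type} [Field F] [Fintype F] [Field K] [Fintype K] [Algebra F K]
    (hF : Fintype.card F = q) (a b c : F) (x y z : K)
    (hx : x ^ q * x = 1) (hy : y ^ q * y = 1) (hz : z ^ q * z = 1)
    (hxy : x ≠ y) (hxz : x ≠ z)
    (h1 : a + b + c = 0) (h2 : a • x + b • y + c • z = 0) : a = 0 := by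
  have hfro : ∀ t : K, FiniteField.frobeniusAlgHom F K t = t ^ q := by
    intro t; simp [hF]
  have h3 := congrArg (FiniteField.frobeniusAlgHom F K) h2
  rw [map_add, map_add, map_smul, map_smul, map_smul, map_zero, hfro, hfro, hfro] at h3
  have h1' := congrArg (algebraMap F K) h1
  simp only [map_add, map_zero] at h1'
  simp only [Algebra.smul_def] at h2 h3
  set A := algebraMap F K a with hA
  set B := algebraMap F K b
  set C := algebraMap F K c
  generalize x ^ q = X at *
  generalize y ^ q = Y at *
  generalize z ^ q = Z at *
  have h4 : A * (y - x) * (z - x) = 0 := by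
    have e1 : A * y * z + B * x * z + C * x * y = 0 := by
      linear_combination (x * y * z) * h3 - A * y * z * hx - B * x * z * hy - C * x * y * hz
    linear_combination e1 + x * h2 - (x * z + x * y) * h1'
  have h5 : A = 0 := by
    rcases mul_eq_zero.1 h4 with h | h
    · rcases mul_eq_zero.1 h with h | h
      · exact h
      · exact absurd (sub_eq_zero.1 h).symm hxy
    · exact absurd (sub_eq_zero.1 h).symm hxz
  exact (map_eq_zero _).1 h5

lemma synd_three {q : ℕ} {F K : Type} [Field F] [Fintype F] [Field K] [Fintype K] [Algebra F K]
    (hF : Fintype.card F = q) {n : ℕ} (x : Fin n → K) (hx : ∀ i, x i ^ q * x i = 1)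
    (hinj : Function.Injective x) (v : Fin n → F) (hv : synd F x v = 0) (i j k : Fin n)
    (hij : i ≠ j) (hik : i ≠ k) (hjk : j ≠ k)
    (hs : ∀ l, l ∉ ({i, j, k} : Finset (Fin n)) → v l = 0) : v = 0 := by
  have h1 : ∑ l, v l = 0 := congrArg Prod.fst hv
  have h2 : ∑ l, v l • x l = 0 := congrArg Prod.snd hv
  rw [← Finset.sum_subset (Finset.subset_univ {i, j, k}) (fun l _ hl => hs l hl)] at h1
  rw [← Finset.sum_subset (Finset.subset_univ {i, j, k})
    (fun l _ hl => by rw [hs l hl, zero_smul])] at h2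
  rw [Finset.sum_insert (by simp [hij, hik]), Finset.sum_insert (by simp [hjk]),
    Finset.sum_singleton] at h1 h2
  have ha : v i = 0 := three_aux hF (v i) (v j) (v k) (x i) (x j) (x k) (hx i) (hx j) (hx k)
    (hinj.ne hij) (hinj.ne hik) (by linear_combination h1) (by rw [← h2]; abel)
  have hb : v j = 0 := three_aux hF (v j) (v i) (v k) (x j) (x i) (x k) (hx j) (hx i) (hx k)
    (hinj.ne hij.symm) (hinj.ne hjk) (by linear_combination h1) (by rw [← h2]; abel)
  have hc : v k = 0 := three_aux hF (v k) (v i) (v j) (x k) (x i) (x j) (hx k) (hx i) (hx j)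
    (hinj.ne hik.symm) (hinj.ne hjk.symm) (by linear_combination h1) (by rw [← h2]; abel)
  funext l
  by_cases hl : l ∈ ({i, j, k} : Finset (Fin n))
  · simp only [Finset.mem_insert, Finset.mem_singleton] at hl
    rcases hl with rfl | rfl | rfl <;> assumption
  · exact hs l hl

lemma synd_hwt {q : ℕ} {F K : Type} [Field F] [Fintype F] [Field K] [Fintype K] [Algebra F K]
    (hF : Fintype.card F = q) {n : ℕ} (hn : 3 ≤ n) (x : Fin n → K) (hx : ∀ i, x i ^ q * x i = 1)
    (hinj : Function.Injective x) (v : Fin n → F) (hv : synd F x v = 0) (h0 : v ≠ 0) :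
    4 ≤ hwt v := by
  by_contra hlt
  have hle : (Finset.filter (fun i => v i ≠ 0) Finset.univ).card ≤ 3 := by
    unfold hwt at hlt; omega
  obtain ⟨T, hT, -, hc⟩ := Finset.exists_subsuperset_card_eq
    (Finset.subset_univ (Finset.filter (fun i => v i ≠ 0) Finset.univ)) hle (by simpa using hn)
  obtain ⟨i, j, k, hij, hik, hjk, rfl⟩ := Finset.card_eq_three.1 hc
  refine h0 (synd_three hF x hx hinj v hv i j k hij hik hjk ?_)
  intro l hl
  by_contra h
  exact hl (hT (by simp [h]))

lemma synd_surj {q : ℕ} {F K : Type} [Field F] [Fintype F] [Field K] [Fintype K] [Algebra F K]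
    (hF : Fintype.card F = q) {n : ℕ} (hn : 3 ≤ n) (x : Fin n → K) (hx : ∀ i, x i ^ q * x i = 1)
    (hinj : Function.Injective x) (hr : Module.finrank F K = 2) :
    Function.Surjective (synd F x) := by
  have hin : Function.Injective (synd F x ∘ₗ
      Function.ExtendByZero.linearMap F (Fin.castLE hn)) := by
    rw [← LinearMap.ker_eq_bot, LinearMap.ker_eq_bot']
    intro w hw
    have hv := synd_three hF x hx hinj _ hw (Fin.castLE hn 0) (Fin.castLE hn 1) (Fin.castLE hn 2)
      (by simp [Fin.ext_iff]) (by simp [Fin.ext_iff]) (by simp [Fin.ext_iff]) (by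
        intro l hl
        refine Function.extend_apply' _ _ _ ?_
        rintro ⟨m, rfl⟩
        fin_cases m <;> simp at hl)
    funext m
    have := congrFun hv (Fin.castLE hn m)
    change Function.extend (Fin.castLE hn) w 0 (Fin.castLE hn m) = 0 at this
    rwa [(Fin.castLE_injective hn).extend_apply] at this
  have hs := (LinearMap.injective_iff_surjective_of_finrank_eq_finrank (by simp [hr])).1 hin
  intro y
  obtain ⟨w, hw⟩ := hs y
  exact ⟨_, hw⟩

lemma synd_four {F K : Type} [Field F] [Fintype F] [Field K] [Fintype K] [Algebra F K]
    {n : ℕ} (hn : 4 ≤ n) (x : Fin n → K) (hr : Module.finrank F K = 2) :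
    ∃ v, synd F x v = 0 ∧ v ≠ 0 ∧ hwt v ≤ 4 := by
  have hk := LinearMap.ker_ne_bot_of_finrank_lt (f := synd F x ∘ₗ
      Function.ExtendByZero.linearMap F (Fin.castLE hn)) (by simp [hr])
  obtain ⟨w, hw, hw0⟩ := Submodule.exists_mem_ne_zero_of_ne_bot hk
  refine ⟨Function.ExtendByZero.linearMap F (Fin.castLE hn) w, hw, ?_, ?_⟩
  · intro h
    apply hw0
    funext m
    have := congrFun h (Fin.castLE hn m)
    change Function.extend (Fin.castLE hn) w 0 (Fin.castLE hn m) = 0 at this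
    rwa [(Fin.castLE_injective hn).extend_apply] at this
  · unfold hwt
    calc _ ≤ (Finset.univ.image (Fin.castLE hn)).card := by
          apply Finset.card_le_card
          intro l hl
          simp only [Finset.mem_filter, Finset.mem_univ, true_and] at hl
          by_contra hc
          apply hl
          refine Function.extend_apply' _ _ _ ?_
          rintro ⟨m, rfl⟩
          simp at hc
      _ ≤ 4 := Finset.card_image_le.trans (by simp)

lemma mem_dual_iff (q : ℕ) (F : Type) {K : Type} [Field F] [Fintype F] [Field K]
    [Fintype K] [Algebra F K] (γ : Kˣ) (v : Fin (q + 1) → F) :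
    v ∈ dualCode q F γ ↔
      synd F (fun i : Fin (q + 1) => (γ : K) ^ (((q : ℤ) - 1) * ((i : ℕ) : ℤ))) v = 0 := by
  set x := (fun i : Fin (q + 1) => (γ : K) ^ (((q : ℤ) - 1) * ((i : ℕ) : ℤ))) with hxdef
  have key : ∀ (a : F) (b : K), ∑ i, v i * (a + cw q F γ b i)
      = a * (∑ i, v i) + Algebra.trace F K (b * ∑ i, v i • x i) := by
    intro a b
    simp only [Finset.mul_sum, map_sum, ← Finset.sum_add_distrib]
    refine Finset.sum_congr rfl fun i _ => ?_
    rw [mul_smul_comm, map_smul, smul_eq_mul]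
    simp only [cw, hxdef]
    ring
  simp only [dualCode, code, Finset.mem_filter, Finset.mem_univ, true_and, Finset.mem_image,
    forall_exists_index, Prod.forall]
  constructor
  · intro h
    have h' : ∀ (a : F) (b : K), a * (∑ i, v i) + Algebra.trace F K (b * ∑ i, v i • x i) = 0 := by
      intro a b
      rw [← key]
      exact h _ a b rfl
    refine Prod.ext ?_ ?_
    · have := h' 1 0
      rw [one_mul, zero_mul, map_zero, add_zero] at this
      exact this
    · show ∑ i, v i • x i = 0
      refine (traceForm_nondegenerate F K).2 _ ?_
      intro b
      have := h' 0 b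
      rw [zero_mul, zero_add] at this
      rw [Algebra.traceForm_apply]
      exact this
  · rintro h _ a b rfl
    rw [key]
    have h1 : ∑ l, v l = 0 := congrArg Prod.fst h
    have h2 : ∑ l, v l • x l = 0 := congrArg Prod.snd h
    simp [h1, h2]

/-- For `q ≠ 2`, the dual code `C_{(1,q+1,q²)}^⊥` has exactly `q^{q−2}` codewords and
its minimum Hamming distance is `4`. -/
theorem dual_code_min_distance_four
    (q : ℕ) (F K : Type) [Field F] [Fintype F] [Field K] [Fintype K] [Algebra F K]
    (hF : Fintype.card F = q) (hK : Fintype.card K = q ^ 2)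
    (γ : Kˣ) (hγ : ∀ x : Kˣ, x ∈ Subgroup.zpowers γ)
    (htr : ∀ x : K, algebraMap F K (Algebra.trace F K x) = x + x ^ q)
    (hq2 : q ≠ 2) :
    (dualCode q F γ).card = q ^ (q - 2) ∧
    (∀ v ∈ dualCode q F γ, v ≠ 0 → 4 ≤ hwt v) ∧
    (∃ v ∈ dualCode q F γ, hwt v = 4) := by
  have hq1 : 1 < q := by rw [← hF]; exact Fintype.one_lt_card
  have hq3 : 3 ≤ q := by omega
  have hr : Module.finrank F K = 2 := by
    have := Module.card_eq_pow_finrank (K := F) (V := K)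
    rw [hK, hF] at this
    exact (Nat.pow_right_injective hq1 this).symm
  have hord : orderOf γ = q ^ 2 - 1 := by
    rw [orderOf_eq_card_of_forall_mem_zpowers hγ, Nat.card_eq_fintype_card, Fintype.card_units, hK]
  set x := (fun i : Fin (q + 1) => (γ : K) ^ (((q : ℤ) - 1) * ((i : ℕ) : ℤ))) with hxdef
  have hxp : ∀ i, x i = ((γ ^ ((q - 1) * (i : ℕ)) : Kˣ) : K) := by
    intro i
    have : ((q : ℤ) - 1) * ((i : ℕ) : ℤ) = (((q - 1) * (i : ℕ) : ℕ) : ℤ) := by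
      push_cast [Nat.cast_sub hq1.le]; ring
    simp only [hxdef, this, zpow_natCast, Units.val_pow_eq_pow_val]
  have hinj : Function.Injective x := by
    intro i j hij
    rw [hxp, hxp] at hij
    have hij := Units.ext hij
    have hlt : ∀ i : Fin (q + 1), (q - 1) * (i : ℕ) < orderOf γ := by
      intro i
      rw [hord]
      obtain ⟨r, rfl⟩ : ∃ r, q = r + 1 := ⟨q - 1, by omega⟩
      have : (i : ℕ) ≤ r + 1 := by omega
      have h2 : r * (i : ℕ) ≤ r * (r + 1) := Nat.mul_le_mul_left _ this
      have h3 : (r + 1) ^ 2 - 1 = r * (r + 1) + r := by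
        rw [show (r + 1) ^ 2 = r * (r + 1) + r + 1 by ring]; rfl
      rw [h3]
      simp only [Nat.add_sub_cancel]
      omega
    have := pow_injOn_Iio_orderOf (hlt i) (hlt j) hij
    exact Fin.ext (Nat.eq_of_mul_eq_mul_left (by omega) this)
  have hx : ∀ i, x i ^ q * x i = 1 := by
    intro i
    rw [hxp, ← pow_succ, ← Units.val_pow_eq_pow_val, ← pow_mul]
    have : (q - 1) * (i : ℕ) * (q + 1) = orderOf γ * i := by
      rw [hord, show q ^ 2 - 1 = (q + 1) * (q - 1) by simpa using Nat.sq_sub_sq q 1]; ring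
    rw [this, pow_mul, pow_orderOf_eq_one, one_pow, Units.val_one]
  refine ⟨?_, ?_, ?_⟩
  · have hrn := LinearMap.finrank_range_add_finrank_ker (synd F x)
    rw [LinearMap.range_eq_top.2 (synd_surj hF (by omega) x hx hinj hr), finrank_top] at hrn
    simp only [Module.finrank_prod, hr, Module.finrank_self, Module.finrank_fin_fun] at hrn
    have hker : Module.finrank F (LinearMap.ker (synd F x)) = q - 2 := by omega
    have hc := Module.card_eq_pow_finrank (K := F) (V := LinearMap.ker (synd F x))
    rw [hker, hF, ← Nat.card_eq_fintype_card] at hc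
    rw [← hc, ← Nat.card_eq_finsetCard]
    refine Nat.card_congr (Equiv.subtypeEquivRight fun v => ?_)
    rw [LinearMap.mem_ker]
    exact mem_dual_iff q F γ v
  · intro v hv h0
    exact synd_hwt hF (by omega) x hx hinj v ((mem_dual_iff q F γ v).1 hv) h0
  · obtain ⟨v, hv, h0, h4⟩ := synd_four (F := F) (by omega) x hr
    exact ⟨v, (mem_dual_iff q F γ v).2 hv,
      le_antisymm h4 (synd_hwt hF (by omega) x hx hinj v hv h0)⟩
end

section
/- Suppose q ≠ 2. Then the number of codewords of Hamming weight 4 in the dual code C_{(1,q+1,q^2)}^⊥ equals q(q²−1)(q−1)(q−2)/24. -/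
open scoped Classical

lemma count_aux {n : ℕ} {F : Type} [Field F] [Fintype F] (D : Finset (Fin n → F))
    (hsub : ∀ v ∈ D, ∀ w ∈ D, v - w ∈ D) (hsmul : ∀ (c : F), ∀ v ∈ D, c • v ∈ D)
    (h3 : ∀ v ∈ D, ∀ T : Finset (Fin n), T.card ≤ 3 → (∀ i, i ∉ T → v i = 0) → v = 0)
    (h4 : ∀ S : Finset (Fin n), S.card = 4 → ∃ v ∈ D, v ≠ 0 ∧ ∀ i, i ∉ S → v i = 0) :
    (Finset.filter (fun v => hwt v = 4) D).card = n.choose 4 * (Fintype.card F - 1) := by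
  have hmap : ∀ v ∈ Finset.filter (fun v => hwt v = 4) D,
      (Finset.univ.filter (fun i => v i ≠ 0)) ∈ Finset.powersetCard 4 (Finset.univ : Finset (Fin n)) := by
    intro v hv
    rw [Finset.mem_powersetCard]
    exact ⟨Finset.subset_univ _, (Finset.mem_filter.1 hv).2⟩
  rw [Finset.card_eq_sum_card_fiberwise hmap]
  rw [Finset.sum_const_nat (m := Fintype.card F - 1), Finset.card_powersetCard, Finset.card_univ,
    Fintype.card_fin]
  intro S hS
  have hSc := (Finset.mem_powersetCard.1 hS).2
  obtain ⟨s, hs⟩ : S.Nonempty := by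
    rw [← Finset.card_pos]; omega
  have hcard : (Finset.univ.erase (0 : F)).card = Fintype.card F - 1 := by
    rw [Finset.card_erase_of_mem (Finset.mem_univ _), Finset.card_univ]
  rw [← hcard]
  have key : ∀ v ∈ D, (∀ i, i ∉ S → v i = 0) → ∀ t ∈ S, v t = 0 → v = 0 := by
    intro v hv hvS t ht hvt
    apply h3 v hv (S.erase t) (by rw [Finset.card_erase_of_mem ht]; omega)
    intro i hi
    by_cases hit : i = t
    · rw [hit, hvt]
    · exact hvS i (fun h => hi (Finset.mem_erase.2 ⟨hit, h⟩))
  have hmem : ∀ v, v ∈ Finset.filter (fun v => (Finset.univ.filter (fun i => v i ≠ 0)) = S)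
      (Finset.filter (fun v => hwt v = 4) D) ↔ v ∈ D ∧ ∀ i, v i ≠ 0 ↔ i ∈ S := by
    intro v
    rw [Finset.mem_filter, Finset.mem_filter]
    constructor
    · rintro ⟨⟨h1, h2⟩, h⟩
      refine ⟨h1, fun i => ?_⟩
      rw [← h]; simp
    · rintro ⟨h1, h2⟩
      have : (Finset.univ.filter (fun i => v i ≠ 0)) = S := by
        ext i; simp [← h2 i]
      exact ⟨⟨h1, by unfold hwt; rw [this, hSc]⟩, this⟩
  apply Finset.card_bij (fun v _ => v s)
  · intro v hv
    rw [hmem] at hv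
    exact Finset.mem_erase.2 ⟨(hv.2 s).2 hs, Finset.mem_univ _⟩
  · intro v hv w hw hvw
    rw [hmem] at hv hw
    rw [← sub_eq_zero]
    refine key _ (hsub v hv.1 w hw.1) ?_ s hs (by simpa [sub_eq_zero] using hvw)
    intro i hi
    have h1 : v i = 0 := by by_contra h; exact hi ((hv.2 i).1 h)
    have h2 : w i = 0 := by by_contra h; exact hi ((hw.2 i).1 h)
    simp [h1, h2]
  · intro b hb
    have hb0 := (Finset.mem_erase.1 hb).1
    obtain ⟨w, hwD, hw0, hwS⟩ := h4 S hSc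
    have hne : ∀ t ∈ S, w t ≠ 0 := fun t ht h => hw0 (key w hwD hwS t ht h)
    refine ⟨(b / w s) • w, ?_, ?_⟩
    · rw [hmem]
      refine ⟨hsmul _ _ hwD, fun i => ⟨fun h => ?_, fun h => ?_⟩⟩
      · by_contra hi
        exact h (by simp [hwS i hi])
      · simp only [Pi.smul_apply, smul_eq_mul]
        exact mul_ne_zero (div_ne_zero hb0 (hne s hs)) (hne i h)
    · simp only [Pi.smul_apply, smul_eq_mul]
      exact div_mul_cancel₀ _ (hne s hs)

/-- For `q ≠ 2`, the number of codewords of Hamming weight `4` in the dual code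
`C_{(1,q+1,q²)}^⊥` equals `q(q²−1)(q−1)(q−2)/24`. -/
theorem dual_code_A4
    (q : ℕ) (F K : Type) [Field F] [Fintype F] [Field K] [Fintype K] [Algebra F K]
    (hF : Fintype.card F = q) (hK : Fintype.card K = q ^ 2)
    (γ : Kˣ) (hγ : ∀ x : Kˣ, x ∈ Subgroup.zpowers γ)
    (htr : ∀ x : K, algebraMap F K (Algebra.trace F K x) = x + x ^ q)
    (hq2 : q ≠ 2) :
    ((Finset.filter (fun v => hwt v = 4) (dualCode q F γ)).card : ℚ)
      = q * ((q : ℚ) ^ 2 - 1) * ((q : ℚ) - 1) * ((q : ℚ) - 2) / 24 := by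
  have hq : 2 ≤ q := by rw [← hF]; exact Fintype.one_lt_card
  have hrank : Module.finrank F K = 2 := by
    have := Module.card_eq_pow_finrank (K := F) (V := K)
    rw [hK, hF] at this
    exact (Nat.pow_right_injective hq this).symm
  have hord : (orderOf γ : ℤ) = ((q : ℤ) - 1) * ((q : ℤ) + 1) := by
    rw [orderOf_eq_card_of_forall_mem_zpowers hγ, Nat.card_eq_fintype_card, Fintype.card_units, hK,
      Nat.cast_sub (Nat.one_le_pow _ _ (by omega))]
    push_cast; ring
  obtain ⟨u, hu⟩ : ∃ u : Fin (q + 1) → K,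
      u = fun i : Fin (q + 1) => (γ : K) ^ (((q : ℤ) - 1) * ((i : ℕ) : ℤ)) := ⟨_, rfl⟩
  have hu0 : ∀ i, u i ≠ 0 := by
    intro i; rw [hu]; exact zpow_ne_zero _ γ.ne_zero
  have huinj : Function.Injective u := by
    intro i j hij
    rw [hu] at hij
    simp only [← Units.val_zpow_eq_zpow_val] at hij
    have h1 := Units.ext hij
    have h2 : γ ^ (((q : ℤ) - 1) * ((i : ℕ) : ℤ) - ((q : ℤ) - 1) * ((j : ℕ) : ℤ)) = 1 := by
      rw [zpow_sub, h1, mul_inv_cancel]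
    rw [← orderOf_dvd_iff_zpow_eq_one, hord, ← mul_sub] at h2
    have h3 := Int.dvd_of_mul_dvd_mul_left (by omega) h2
    have h4 := Int.eq_zero_of_abs_lt_dvd h3 (by rw [abs_lt]; omega)
    ext; omega
  have huq : ∀ i, u i ^ q = (u i)⁻¹ := by
    intro i
    apply eq_inv_of_mul_eq_one_left
    rw [← pow_succ, hu]
    simp only [← Units.val_zpow_eq_zpow_val, ← Units.val_pow_eq_pow_val]
    rw [Units.val_eq_one, ← zpow_natCast, ← zpow_mul, ← orderOf_dvd_iff_zpow_eq_one, hord]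
    exact ⟨((i : ℕ) : ℤ), by push_cast; ring⟩
  have hD : ∀ v, v ∈ dualCode q F γ ↔ ∑ i, v i = 0 ∧ ∑ i, v i • u i = 0 := by
    intro v
    have hsum : ∀ (a : F) (b : K), ∑ i, v i * (a + cw q F γ b i)
        = a * ∑ i, v i + Algebra.trace F K (b * ∑ i, v i • u i) := by
      intro a b
      simp only [mul_add, Finset.sum_add_distrib, Finset.mul_sum, map_sum, mul_smul_comm, map_smul,
        smul_eq_mul, cw, hu]
      simp only [mul_comm a]
    have hiff : v ∈ dualCode q F γ ↔ ∀ (a : F) (b : K),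
        a * ∑ i, v i + Algebra.trace F K (b * ∑ i, v i • u i) = 0 := by
      simp only [← hsum, dualCode, code, Finset.mem_filter, Finset.mem_univ, true_and,
        Finset.mem_image]
      constructor
      · intro h a b
        exact h _ ⟨(a, b), rfl⟩
      · rintro h c ⟨⟨a, b⟩, rfl⟩
        exact h a b
    rw [hiff]
    constructor
    · intro h
      refine ⟨by simpa using h 1 0, ?_⟩
      have h' : ∀ b, Algebra.trace F K (b * ∑ i, v i • u i) = 0 := fun b => by simpa using h 0 b
      by_contra hne
      obtain ⟨x, hx⟩ := Algebra.trace_surjective F K 1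
      have := h' (x * (∑ i, v i • u i)⁻¹)
      rw [inv_mul_cancel_right₀ hne, hx] at this
      exact one_ne_zero this
    · rintro ⟨h1, h2⟩ a b
      rw [h1, h2]; simp
  have hD' : ∀ v ∈ dualCode q F γ, ∑ i, v i • (u i)⁻¹ = 0 := by
    intro v hv
    have h := ((hD v).1 hv).2
    have := congrArg (FiniteField.frobeniusAlgHom F K) h
    simpa only [map_sum, map_smul, map_zero, FiniteField.coe_frobeniusAlgHom, hF, huq] using this
  have hmain := count_aux (dualCode q F γ) ?_ ?_ ?_ ?_
  · rw [hmain, hF]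
    have hc := Nat.descFactorial_eq_factorial_mul_choose (q + 1) 4
    obtain ⟨m, rfl⟩ : ∃ m, q = m + 2 := ⟨q - 2, by omega⟩
    have h24 : ((m + 3 : ℚ) * (m + 2) * (m + 1) * m) = 24 * ((m + 2 + 1).choose 4 : ℕ) := by
      have : (m + 3) * (m + 2) * (m + 1) * m = 24 * (m + 2 + 1).choose 4 := by
        have e : Nat.factorial 4 = 24 := rfl
        rw [e] at hc
        rw [← hc]
        simp [Nat.descFactorial]
        ring
      exact_mod_cast this
    have e2 : m + 2 - 1 = m + 1 := rfl
    rw [e2]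
    push_cast
    linear_combination (-(m + 1 : ℚ) / 24) * h24
  · intro v hv w hw
    rw [hD] at *
    simp [sub_smul, hv, hw]
  · intro c v hv
    rw [hD] at *
    simp only [Pi.smul_apply, smul_assoc, ← Finset.smul_sum, hv, smul_zero, and_self]
  · intro v hv T hT hvT
    funext j
    by_contra hj
    have hjT : j ∈ T := by by_contra h; exact hj (hvT j h)
    obtain ⟨a, b, hab, ha, hb⟩ : ∃ a b, (∀ i ∈ T, i ≠ j → i = a ∨ i = b) ∧
        (v j • ((u j - u a) * (u j - u b) * (u j)⁻¹) = 0 → False) ∧ True := by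
      have hle : (T.erase j).card ≤ 2 := by rw [Finset.card_erase_of_mem hjT]; omega
      have hsub : T.erase j ⊆ Finset.univ.erase j := Finset.erase_subset_erase _ (Finset.subset_univ _)
      obtain ⟨R, hR1, hR2, hR3⟩ := Finset.exists_subsuperset_card_eq hsub hle
        (by rw [Finset.card_erase_of_mem (Finset.mem_univ _), Finset.card_univ, Fintype.card_fin]; omega)
      obtain ⟨a, b, hab, rfl⟩ := Finset.card_eq_two.1 hR3
      have haj : a ≠ j := (Finset.mem_erase.1 (hR2 (by simp))).1
      have hbj : b ≠ j := (Finset.mem_erase.1 (hR2 (by simp))).1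
      refine ⟨a, b, fun i hi hij => ?_, ?_, trivial⟩
      · simpa using hR1 (Finset.mem_erase.2 ⟨hij, hi⟩)
      · intro h
        rcases smul_eq_zero.1 h with h | h
        · exact hj h
        · exact mul_ne_zero (mul_ne_zero (sub_ne_zero.2 fun h => haj (huinj h).symm)
            (sub_ne_zero.2 fun h => hbj (huinj h).symm)) (inv_ne_zero (hu0 j)) h
    apply ha
    have hs : ∑ i, v i • ((u i - u a) * (u i - u b) * (u i)⁻¹) = 0 := by
      have e : ∀ i, v i • ((u i - u a) * (u i - u b) * (u i)⁻¹)
          = v i • u i - (u a + u b) * algebraMap F K (v i) + (u a * u b) * (v i • (u i)⁻¹) := by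
        intro i
        have := hu0 i
        simp only [Algebra.smul_def]
        field_simp
        ring
      simp only [e, Finset.sum_add_distrib, Finset.sum_sub_distrib, ← Finset.mul_sum, ← map_sum]
      rw [hD' v hv, ((hD v).1 hv).1, ((hD v).1 hv).2]
      simp
    rw [← hs]
    symm
    apply Finset.sum_eq_single j
    · intro i _ hij
      by_cases hi : i ∈ T
      · rcases hab i hi hij with rfl | rfl <;> simp
      · simp [hvT i hi]
    · simp
  · intro S hS
    let f : (S → F) →ₗ[F] F × K :=
      { toFun := fun w => (∑ i, w i, ∑ i, w i • u i)
        map_add' := by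
          intro x y; simp [Finset.sum_add_distrib, add_smul]
        map_smul' := by
          intro c x; simp [Finset.mul_sum, Finset.smul_sum, mul_smul] }
    have hker : LinearMap.ker f ≠ ⊥ := by
      apply LinearMap.ker_ne_bot_of_finrank_lt
      rw [Module.finrank_prod, hrank, Module.finrank_self, Module.finrank_fintype_fun_eq_card,
        Fintype.card_coe, hS]
      norm_num
    obtain ⟨w, hw, hw0⟩ := (Submodule.ne_bot_iff _).1 hker
    have hw' : f w = 0 := hw
    have h1 : ∑ i, w i = 0 := congrArg Prod.fst hw'
    have h2 : ∑ i, w i • u i = 0 := congrArg Prod.snd hw'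
    obtain ⟨x, hx⟩ : ∃ x : Fin (q + 1) → F, x = fun i => if h : i ∈ S then w ⟨i, h⟩ else 0 :=
      ⟨_, rfl⟩
    have hxS : ∀ i, i ∉ S → x i = 0 := fun i hi => by rw [hx]; simp [hi]
    have hxw : ∀ i : S, x i = w i := fun i => by rw [hx]; simp
    refine ⟨x, ?_, ?_, hxS⟩
    · rw [hD]
      constructor
      · rw [← h1, ← Finset.sum_subset (Finset.subset_univ S) (fun i _ hi => hxS i hi),
          ← Finset.sum_coe_sort]
        exact Finset.sum_congr rfl fun i _ => hxw i
      · rw [← h2, ← Finset.sum_subset (Finset.subset_univ S)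
          (fun i _ hi => by rw [hxS i hi, zero_smul]), ← Finset.sum_coe_sort]
        exact Finset.sum_congr rfl fun i _ => by rw [hxw i]
    · intro h
      apply hw0
      funext i
      rw [← hxw i, h]; rfl
end

section
/- Suppose q ≥ 5. Then the dual code C_{(1,q+1,q^2)}^⊥ is a (q−2)-weight code: the set of Hamming weights of its nonzero codewords is exactly {4, 5, …, q+1} (every nonzero codeword has weight at least 4, and for every integer j with 4 ≤ j ≤ q+1 there exists a codeword of weight j). -/
open scoped Classical

section aux
variable {q : ℕ} {F K : Type} [Field F] [Fintype F] [Field K] [Fintype K] [Algebra F K]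

/-- evaluation points -/
noncomputable def pt (q : ℕ) {K : Type} [Field K] (γ : Kˣ) (i : Fin (q + 1)) : K :=
  (γ : K) ^ (((q : ℤ) - 1) * ((i : ℕ) : ℤ))

theorem order_gamma (hK : Fintype.card K = q ^ 2) (γ : Kˣ)
    (hγ : ∀ x : Kˣ, x ∈ Subgroup.zpowers γ) (hq5 : 5 ≤ q) :
    ((orderOf γ : ℕ) : ℤ) = ((q : ℤ) - 1) * ((q : ℤ) + 1) := by
  have h1 : orderOf γ = Nat.card Kˣ := orderOf_eq_card_of_forall_mem_zpowers hγ
  rw [h1, Nat.card_units, Nat.card_eq_fintype_card, hK, Nat.cast_sub (by nlinarith)]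
  push_cast
  ring

theorem pt_ne_zero (γ : Kˣ) (i : Fin (q + 1)) : pt q γ i ≠ 0 :=
  zpow_ne_zero _ γ.ne_zero

theorem pt_inj (hK : Fintype.card K = q ^ 2) (γ : Kˣ)
    (hγ : ∀ x : Kˣ, x ∈ Subgroup.zpowers γ) (hq5 : 5 ≤ q) :
    Function.Injective (pt q γ) := by
  intro i j h
  have h' : γ ^ (((q : ℤ) - 1) * ((i : ℕ) : ℤ)) = γ ^ (((q : ℤ) - 1) * ((j : ℕ) : ℤ)) := by
    apply Units.ext
    simpa [pt] using h
  have h2 := orderOf_dvd_sub_iff_zpow_eq_zpow.mpr h'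
  rw [order_gamma hK γ hγ hq5, ← mul_sub] at h2
  have h3 := Int.dvd_of_mul_dvd_mul_left (by omega) h2
  have h4 : ((i : ℕ) : ℤ) - ((j : ℕ) : ℤ) = 0 := by
    apply Int.eq_zero_of_abs_lt_dvd h3
    have := i.2
    have := j.2
    rw [abs_lt]
    omega
  apply Fin.ext
  omega

theorem pt_pow (hK : Fintype.card K = q ^ 2) (γ : Kˣ)
    (hγ : ∀ x : Kˣ, x ∈ Subgroup.zpowers γ) (hq5 : 5 ≤ q) (i : Fin (q + 1)) :
    pt q γ i ^ q = (pt q γ i)⁻¹ := by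
  have : pt q γ i ^ q * pt q γ i = 1 := by
    rw [← pow_succ]
    have h : (γ ^ (((q : ℤ) - 1) * ((i : ℕ) : ℤ))) ^ (q + 1) = 1 := by
      rw [← zpow_natCast, ← zpow_mul]
      apply orderOf_dvd_iff_zpow_eq_one.mp
      rw [order_gamma hK γ hγ hq5]
      exact ⟨((i : ℕ) : ℤ), by push_cast; ring⟩
    have h2 := congrArg (Units.val) h
    simpa [pt] using h2
  exact eq_inv_of_mul_eq_one_left this

theorem mem_dual (γ : Kˣ) (v : Fin (q + 1) → F) :
    v ∈ dualCode q F γ ↔ (∑ i, v i = 0 ∧ ∑ i, v i • pt q γ i = 0) := by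
  have key : ∀ (α : F) (β : K), ∑ i, v i * (α + cw q F γ β i)
      = α * (∑ i, v i) + Algebra.trace F K (β * ∑ i, v i • pt q γ i) := by
    intro α β
    rw [Finset.mul_sum, Finset.mul_sum, map_sum, ← Finset.sum_add_distrib]
    refine Finset.sum_congr rfl fun i _ => ?_
    rw [mul_smul_comm, map_smul, smul_eq_mul]
    simp only [cw, pt]
    ring
  have hm : v ∈ dualCode q F γ ↔ ∀ (α : F) (β : K), ∑ i, v i * (α + cw q F γ β i) = 0 := by
    simp only [dualCode, code, Finset.mem_filter, Finset.mem_univ, true_and, Finset.mem_image,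
      Prod.exists]
    constructor
    · intro h α β
      exact h _ ⟨α, β, rfl⟩
    · rintro h c ⟨α, β, rfl⟩
      exact h α β
  rw [hm]
  constructor
  · intro h
    have h1 := h 1 0
    rw [key] at h1
    refine ⟨by simpa using h1, ?_⟩
    by_contra hy
    obtain ⟨z, hz⟩ := Algebra.trace_surjective F K 1
    have h2 := h 0 (z * (∑ i, v i • pt q γ i)⁻¹)
    rw [key, mul_assoc, inv_mul_cancel₀ hy] at h2
    simp [hz] at h2
  · rintro ⟨h1, h2⟩ α β
    rw [key, h1, h2]
    simp

theorem inv_sum (hK : Fintype.card K = q ^ 2) (γ : Kˣ)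
    (hγ : ∀ x : Kˣ, x ∈ Subgroup.zpowers γ)
    (htr : ∀ x : K, algebraMap F K (Algebra.trace F K x) = x + x ^ q)
    (hq5 : 5 ≤ q) (v : Fin (q + 1) → F) (h : ∑ i, v i • pt q γ i = 0) :
    ∑ i, v i • (pt q γ i)⁻¹ = 0 := by
  have h1 : ∑ i, v i • (pt q γ i + (pt q γ i)⁻¹) = 0 := by
    have h2 := congrArg (fun z => algebraMap F K (Algebra.trace F K z)) h
    simp only [map_sum, map_smul, map_zero, smul_eq_mul, map_mul, htr, pt_pow hK γ hγ hq5] at h2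
    simpa [Algebra.smul_def] using h2
  simpa [smul_add, Finset.sum_add_distrib, h] using h1

theorem low (hK : Fintype.card K = q ^ 2) (γ : Kˣ)
    (hγ : ∀ x : Kˣ, x ∈ Subgroup.zpowers γ)
    (htr : ∀ x : K, algebraMap F K (Algebra.trace F K x) = x + x ^ q)
    (hq5 : 5 ≤ q) (v : Fin (q + 1) → F) (hv : v ∈ dualCode q F γ) (h0 : v ≠ 0) :
    4 ≤ hwt v := by
  obtain ⟨s0, s1⟩ := (mem_dual γ v).1 hv
  have s2 := inv_sum hK γ hγ htr hq5 v s1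
  by_contra hlt
  obtain ⟨a, ha⟩ := Function.ne_iff.1 h0
  simp only [Pi.zero_apply] at ha
  set S := Finset.filter (fun i => v i ≠ 0) Finset.univ with hS
  have hc : S.card < 4 := by simpa [hwt] using hlt
  have haS : a ∈ S := by simp [hS, ha]
  have hc2 : (S.erase a).card ≤ 2 := by
    rw [Finset.card_erase_of_mem haS]; omega
  obtain ⟨T, hT1, hT2, hT3⟩ := Finset.exists_subsuperset_card_eq
    (Finset.erase_subset_erase a (Finset.subset_univ S)) hc2
    (by rw [Finset.card_erase_of_mem (Finset.mem_univ _)]; simp; omega)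
  obtain ⟨b, c, -, rfl⟩ := Finset.card_eq_two.1 hT3
  have hab : a ≠ b := by
    rintro rfl; simpa using hT2 (Finset.mem_insert_self a _)
  have hac : a ≠ c := by
    rintro rfl; simpa using hT2 (by simp : a ∈ ({b, a} : Finset _))
  have e : ∑ i, v i • ((pt q γ i)⁻¹ * ((pt q γ i - pt q γ b) * (pt q γ i - pt q γ c))) = 0 := by
    have e1 : ∀ i, v i • ((pt q γ i)⁻¹ * ((pt q γ i - pt q γ b) * (pt q γ i - pt q γ c)))
        = v i • pt q γ i - (algebraMap F K (v i)) * (pt q γ b + pt q γ c)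
          + (v i • (pt q γ i)⁻¹) * (pt q γ b * pt q γ c) := by
      intro i
      have := pt_ne_zero γ i
      simp only [Algebra.smul_def]
      field_simp
      ring
    simp only [e1]
    rw [Finset.sum_add_distrib, Finset.sum_sub_distrib, ← Finset.sum_mul, ← Finset.sum_mul,
      ← map_sum, s0, s1, s2]
    simp
  rw [Finset.sum_eq_single a] at e
  · have inj := pt_inj hK γ hγ hq5
    simp only [smul_eq_zero, mul_eq_zero, inv_eq_zero, sub_eq_zero] at e
    rcases e with e | e | e | e
    · exact ha e
    · exact pt_ne_zero γ a e
    · exact hab (inj e)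
    · exact hac (inj e)
  · intro i _ hia
    by_cases hi : v i = 0
    · simp [hi]
    · have : i ∈ ({b, c} : Finset _) := hT1 (by simp [hS, hi, hia])
      simp only [Finset.mem_insert, Finset.mem_singleton] at this
      rcases this with rfl | rfl <;> simp
  · simp

theorem four (hF : Fintype.card F = q) (hK : Fintype.card K = q ^ 2) (γ : Kˣ)
    (hγ : ∀ x : Kˣ, x ∈ Subgroup.zpowers γ)
    (htr : ∀ x : K, algebraMap F K (Algebra.trace F K x) = x + x ^ q)
    (hq5 : 5 ≤ q) (T : Finset (Fin (q + 1))) (hT : T.card = 4) :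
    ∃ w ∈ dualCode q F γ, ∀ i, w i ≠ 0 ↔ i ∈ T := by
  let ex : (T → F) → Fin (q + 1) → F := fun f i => if h : i ∈ T then f ⟨i, h⟩ else 0
  let φ : (T → F) → F × K := fun f => (∑ i, ex f i, ∑ i, ex f i • pt q γ i)
  have hcard : Fintype.card (F × K) < Fintype.card (T → F) := by
    rw [Fintype.card_prod, Fintype.card_fun, Fintype.card_coe, hT, hF, hK]
    calc q * q ^ 2 = q ^ 3 := by ring
      _ < q ^ 4 := Nat.pow_lt_pow_right (by omega) (by omega)
  obtain ⟨f, g, hfg, h⟩ := Fintype.exists_ne_map_eq_of_card_lt φ hcard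
  simp only [φ, Prod.mk.injEq] at h
  have hw : (ex f - ex g) ∈ dualCode q F γ := by
    rw [mem_dual]
    simp [sub_smul, Finset.sum_sub_distrib, h.1, h.2]
  have hne : ex f - ex g ≠ 0 := by
    intro h0
    apply hfg
    funext ⟨i, hi⟩
    have := congrFun h0 i
    simpa [ex, hi, sub_eq_zero] using this
  have hl := low hK γ hγ htr hq5 _ hw hne
  have hsub : Finset.filter (fun i => (ex f - ex g) i ≠ 0) Finset.univ ⊆ T := by
    intro i hi
    by_contra hiT
    simp [ex, hiT] at hi
  have heq := Finset.eq_of_subset_of_card_le hsub (by rw [hT]; exact hl)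
  refine ⟨_, hw, fun i => ?_⟩
  rw [← heq]
  simp

theorem exists_wt (hF : Fintype.card F = q) (hK : Fintype.card K = q ^ 2) (γ : Kˣ)
    (hγ : ∀ x : Kˣ, x ∈ Subgroup.zpowers γ)
    (htr : ∀ x : K, algebraMap F K (Algebra.trace F K x) = x + x ^ q)
    (hq5 : 5 ≤ q) (j : ℕ) (hj : 4 ≤ j) (hjq : j ≤ q + 1) :
    ∃ v ∈ dualCode q F γ, hwt v = j := by
  induction j, hj using Nat.le_induction with
  | base =>
    obtain ⟨T, -, hT⟩ := Finset.exists_subset_card_eq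
      (s := (Finset.univ : Finset (Fin (q + 1)))) (n := 4) (by simpa using hjq)
    obtain ⟨w, hw, h⟩ := four (F := F) hF hK γ hγ htr hq5 T hT
    refine ⟨w, hw, ?_⟩
    simp [hwt, h, hT]
  | succ j hj ih =>
    obtain ⟨v, hv, hvj⟩ := ih (by omega)
    set S := Finset.filter (fun i => v i ≠ 0) Finset.univ with hS
    have hSj : S.card = j := hvj
    have memS : ∀ i, i ∈ S ↔ v i ≠ 0 := by intro i; simp [hS]
    obtain ⟨p, hp⟩ : ∃ p, p ∉ S := by
      by_contra! hall
      have : S = Finset.univ := Finset.eq_univ_of_forall hall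
      rw [this] at hSj
      simp at hSj
      omega
    obtain ⟨R, hRS, hR⟩ := Finset.exists_subset_card_eq (s := S) (n := 3) (by omega)
    have hpR : p ∉ R := fun h => hp (hRS h)
    obtain ⟨w, hw, hwT⟩ := four (F := F) hF hK γ hγ htr hq5 (insert p R)
      (by rw [Finset.card_insert_of_notMem hpR, hR])
    obtain ⟨t, ht⟩ : ∃ t : F, t ∉ insert 0 (R.image (fun i => - v i / w i)) := by
      by_contra! hall
      have h1 := Finset.eq_univ_of_forall hall
      have h2 := Finset.card_insert_le (0 : F) (R.image (fun i => - v i / w i))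
      have h3 : (R.image (fun i => - v i / w i)).card ≤ R.card := Finset.card_image_le
      rw [h1, Finset.card_univ, hF] at h2
      omega
    simp only [Finset.mem_insert, Finset.mem_image, not_or, not_exists, not_and] at ht
    refine ⟨v + t • w, ?_, ?_⟩
    · rw [mem_dual] at hv hw ⊢
      constructor
      · simp [Finset.sum_add_distrib, ← Finset.mul_sum, hv.1, hw.1]
      · simp [add_smul, Finset.sum_add_distrib, mul_smul, ← Finset.smul_sum, hv.2, hw.2]
    · have : Finset.filter (fun i => (v + t • w) i ≠ 0) Finset.univ = insert p S := by
        ext i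
        simp only [Finset.mem_filter, Finset.mem_univ, true_and, Finset.mem_insert, Pi.add_apply,
          Pi.smul_apply, smul_eq_mul]
        by_cases hip : i = p
        · subst hip
          have hvi : v i = 0 := by
            by_contra h; exact hp ((memS i).2 h)
          have hwi : w i ≠ 0 := (hwT i).2 (Finset.mem_insert_self _ _)
          simp [hvi, hwi, ht.1]
        · by_cases hiR : i ∈ R
          · have hwi : w i ≠ 0 := (hwT i).2 (Finset.mem_insert_of_mem hiR)
            have h5 := ht.2 i hiR
            simp only [hRS hiR, or_true, iff_true]
            intro h0
            apply h5
            rw [div_eq_iff hwi]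
            linear_combination -h0
          · have hwi : w i = 0 := by
              by_contra h
              have := (hwT i).1 h
              simp [hip, hiR] at this
            simp [hwi, hip, memS]
      unfold hwt
      rw [this, Finset.card_insert_of_notMem hp, hSj]

end aux

/-- For `q ≥ 5`, the dual code `C_{(1,q+1,q²)}^⊥` is a `(q−2)`-weight code: the set of
Hamming weights of its nonzero codewords is exactly `{4, 5, …, q+1}`. -/
theorem dual_code_weights_Icc
    (q : ℕ) (F K : Type) [Field F] [Fintype F] [Field K] [Fintype K] [Algebra F K]
    (hF : Fintype.card F = q) (hK : Fintype.card K = q ^ 2)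
    (γ : Kˣ) (hγ : ∀ x : Kˣ, x ∈ Subgroup.zpowers γ)
    (htr : ∀ x : K, algebraMap F K (Algebra.trace F K x) = x + x ^ q)
    (hq5 : 5 ≤ q) :
    {w : ℕ | ∃ v ∈ dualCode q F γ, v ≠ 0 ∧ hwt v = w} = Set.Icc 4 (q + 1) := by
  ext w
  constructor
  · rintro ⟨v, hv, h0, rfl⟩
    refine ⟨low hK γ hγ htr hq5 v hv h0, ?_⟩
    exact (Finset.card_le_univ _).trans (by simp)
  · rintro ⟨h1, h2⟩
    obtain ⟨v, hv, rfl⟩ := exists_wt (F := F) hF hK γ hγ htr hq5 w h1 h2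
    refine ⟨v, hv, ?_, rfl⟩
    rintro rfl
    simp [hwt] at h1
end

section
/- Let q ≥ 2 and let j be an integer with 2 ≤ j ≤ q+1. Then K_j^{q+1,q}(q−1) = (−1)^j · (q / (j(j−1))) · C(q−1, j−2) · ( q(j² − 3j + 1) + 1 ), as an identity of rational numbers, where C(·,·) denotes the binomial coefficient. -/
/-- The Krawtchouck polynomial value
`K_j^{n,q}(x) = ∑_{l=0}^{j} (−1)^l (q−1)^{j−l} C(x,l) C(n−x,j−l)` as a rational number. -/
def kraw (n q j x : ℕ) : ℚ :=
  ∑ l ∈ Finset.range (j + 1),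
    (-1 : ℚ) ^ l * ((q : ℚ) - 1) ^ (j - l) * (x.choose l : ℚ) * ((n - x).choose (j - l) : ℚ)

theorem choose_succ_q (m k : ℕ) :
    (m.choose (k+1) : ℚ) * ((k:ℚ)+1) = (m.choose k : ℚ) * ((m:ℚ) - k) := by
  rcases le_or_gt k m with h | h
  · have := Nat.choose_succ_right_eq m k
    rw [← Nat.cast_sub h]
    exact_mod_cast this
  · rw [Nat.choose_eq_zero_of_lt h, Nat.choose_eq_zero_of_lt (by omega)]
    simp

/-- For `q ≥ 2` and `2 ≤ j ≤ q+1`: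
`K_j^{q+1,q}(q−1) = (−1)^j (q/(j(j−1))) C(q−1, j−2) (q(j²−3j+1)+1)`. -/
theorem kraw_at_q_sub_one (q j : ℕ) (hq : 2 ≤ q) (hj2 : 2 ≤ j) (hjq : j ≤ q + 1) :
    kraw (q + 1) q j (q - 1)
      = (-1 : ℚ) ^ j * ((q : ℚ) / ((j : ℚ) * ((j : ℚ) - 1))) * ((q - 1).choose (j - 2) : ℚ)
          * ((q : ℚ) * ((j : ℚ) ^ 2 - 3 * (j : ℚ) + 1) + 1) := by
  obtain ⟨k, rfl⟩ := Nat.exists_eq_add_of_le' hj2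
  obtain ⟨m, rfl⟩ := Nat.exists_eq_add_of_le' (show 1 ≤ q by omega)
  unfold kraw
  rw [Finset.sum_range_succ, Finset.sum_range_succ, Finset.sum_range_succ, Finset.sum_eq_zero]
  · have e1 : m + 1 + 1 - (m + 1 - 1) = 2 := by omega
    have e2 : k + 2 - k = 2 := by omega
    have e3 : k + 2 - (k + 1) = 1 := by omega
    have e4 : k + 2 - (k + 2) = 0 := by omega
    have e5 : m + 1 - 1 = m := by omega
    have e6 : k + 2 - 2 = k := by omega
    rw [e1, e2, e3, e4, e5, e6]
    have h1 := choose_succ_q m k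
    have h2 := choose_succ_q m (k+1)
    have p1 : (k:ℚ) + 1 ≠ 0 := by positivity
    have p2 : (k:ℚ) + 2 ≠ 0 := by positivity
    have h1' : (m.choose (k+1) : ℚ) = (m.choose k : ℚ) * ((m:ℚ) - k) / ((k:ℚ)+1) := by
      rw [eq_div_iff p1, h1]
    have h2' : (m.choose (k+2) : ℚ)
        = (m.choose k : ℚ) * ((m:ℚ) - k) / ((k:ℚ)+1) * ((m:ℚ) - k - 1) / ((k:ℚ)+2) := by
      rw [eq_div_iff p2, ← h1']
      push_cast at h2
      linear_combination h2
    rw [h1', h2']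
    have p3 : ((k + 2 : ℕ) : ℚ) - 1 = k + 1 := by push_cast; ring
    rw [p3]
    push_cast
    simp only [Nat.choose_self, Nat.choose_one_right, Nat.choose_zero_right]
    push_cast
    field_simp
    ring
  · intro l hl
    rw [Finset.mem_range] at hl
    rw [Nat.choose_eq_zero_of_lt (show m + 1 + 1 - (m + 1 - 1) < k + 2 - l by omega)]
    simp
end

section
/- Let q ≥ 2 and let j be an integer with 2 ≤ j ≤ q+1. Then K_j^{q+1,q}(q) = (−1)^j · (q / (j(j−1))) · C(q−1, j−2) · ( 1 − q(j−1) ), as an identity of rational numbers, where C(·,·) denotes the binomial coefficient. -/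
/-- For `q ≥ 2` and `2 ≤ j ≤ q+1`:
`K_j^{q+1,q}(q) = (−1)^j (q/(j(j−1))) C(q−1, j−2) (1 − q(j−1))`. -/
theorem kraw_at_q (q j : ℕ) (hq : 2 ≤ q) (hj2 : 2 ≤ j) (hjq : j ≤ q + 1) :
    kraw (q + 1) q j q
      = (-1 : ℚ) ^ j * ((q : ℚ) / ((j : ℚ) * ((j : ℚ) - 1))) * ((q - 1).choose (j - 2) : ℚ)
          * (1 - (q : ℚ) * ((j : ℚ) - 1)) := by
  obtain ⟨k, rfl⟩ : ∃ k, j = k + 2 := ⟨j - 2, by omega⟩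
  obtain ⟨p, rfl⟩ : ∃ p, q = p + 1 := ⟨q - 1, by omega⟩
  have hk : k ≤ p := by omega
  unfold kraw
  rw [Finset.sum_range_succ, Finset.sum_range_succ, Finset.sum_eq_zero]
  · have e1 : k + 2 - (k + 1) = 1 := by omega
    have e2 : p + 1 + 1 - (p + 1) = 1 := by omega
    have e3 : p + 1 - 1 = p := by omega
    have e4 : k + 2 - 2 = k := by omega
    rw [e1, e2, e3, e4, Nat.sub_self]
    have h1 : ((p : ℚ) + 1) * (p.choose k : ℚ) = ((p + 1).choose (k + 1) : ℚ) * ((k : ℚ) + 1) := by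
      exact_mod_cast Nat.add_one_mul_choose_eq p k
    have h2 : ((p + 1).choose (k + 2) : ℚ) * ((k : ℚ) + 2)
        = ((p + 1).choose (k + 1) : ℚ) * ((p : ℚ) - k) := by
      have h := Nat.choose_succ_right_eq (p + 1) (k + 1)
      have e5 : p + 1 - (k + 1) = p - k := by omega
      rw [e5] at h
      rw [← Nat.cast_sub hk]
      exact_mod_cast h
    have n1 : (k : ℚ) + 1 ≠ 0 := by positivity
    have n2 : (k : ℚ) + 2 ≠ 0 := by positivity
    have n3 : ((k : ℚ) + 2) - 1 ≠ 0 := by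
      have : ((k : ℚ) + 2) - 1 = k + 1 := by ring
      rw [this]; exact n1
    have h3 : ((p + 1).choose (k + 1) : ℚ) = ((p : ℚ) + 1) * (p.choose k : ℚ) / ((k : ℚ) + 1) := by
      rw [eq_div_iff n1, h1]
    have h4 : ((p + 1).choose (k + 2) : ℚ)
        = ((p : ℚ) + 1) * (p.choose k : ℚ) / ((k : ℚ) + 1) * ((p : ℚ) - k) / ((k : ℚ) + 2) := by
      rw [eq_div_iff n2, h2, h3]
    rw [h3, h4]
    have n4 : ((k : ℚ) + 2) - 1 = k + 1 := by ring
    push_cast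
    rw [n4, pow_succ (-1 : ℚ) (k + 1)]
    simp only [Nat.choose_self, Nat.choose_zero_right, pow_one, pow_zero, Nat.cast_one]
    field_simp
    ring
  · intro l hl
    have hl' := Finset.mem_range.mp hl
    rw [Nat.choose_eq_zero_of_lt (show p + 1 + 1 - (p + 1) < k + 2 - l by omega)]
    simp
end
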